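/- arXiv:2512.06984 — 2 statements merged into one kernel-verified Lean document; each statement's English description precedes it below -/
import Mathlib

section
/- Let H ∈ (0,1), let W^H be the law of fractional Brownian motion with Hurst parameter H, and let W be the Wiener measure on Ω. Then for W^H-almost every ω̄ ∈ Ω, the local order of W at ω̄ (for the uniform norm) exists and is given by: ord_loc W(ω̄) = 2(H^{−1} − 1) if 0 < H < 1/2, and ord_loc W(ω̄) = 2 if 1/2 ≤ H < 1. -/
open scoped ENNReal NNReal Topology
open Filter MeasureTheory Metric Set

noncomputable section

namespace Multifractal


/-- The `δ`-level Hausdorff pre-measure `H^h_δ` associated to a gauge `h`. -/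
def hMeasAux {X : Type*} [MetricSpace X] (h : ℝ → ℝ) (δ : ℝ≥0∞) (E : Set X) : ℝ≥0∞ :=
  ⨅ (c : ℕ → X) (r : ℕ → ℝ) (_ : ∀ n, 0 < r n ∧ ENNReal.ofReal (r n) ≤ δ)
    (_ : E ⊆ ⋃ n, Metric.ball (c n) (r n)), ∑' n, ENNReal.ofReal (h (r n))

/-- The `h`-Hausdorff measure. -/
def hMeas {X : Type*} [MetricSpace X] (h : ℝ → ℝ) (E : Set X) : ℝ≥0∞ :=
  ⨆ (δ : ℝ≥0∞) (_ : 0 < δ), hMeasAux h δ E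

/-- `Ω`: continuous paths on `[0,1]` vanishing at `0`, with the uniform metric. -/
abbrev PathSpace : Type := {f : C(unitInterval, ℝ) // f 0 = 0}

instance : MeasurableSpace PathSpace := borel PathSpace
instance : BorelSpace PathSpace := ⟨rfl⟩

/-- `μ` is a centered Gaussian process measure on path space with covariance `K`:
a probability measure under which every finite linear combination of coordinates
is a centered real Gaussian with the variance given by `K`. -/
def IsGaussianProcess (μ : Measure PathSpace) (K : unitInterval → unitInterval → ℝ) : Prop :=
  IsProbabilityMeasure μ ∧
  ∀ (n : ℕ) (t : Fin n → unitInterval) (c : Fin n → ℝ),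
    Measure.map (fun ω : PathSpace => ∑ i, c i * ω.1 (t i)) μ =
      ProbabilityTheory.gaussianReal 0
        (Real.toNNReal (∑ i, ∑ j, c i * c j * K (t i) (t j)))

/-- `W` is the Wiener measure: the coordinate process is centered Gaussian with
covariance `min s t`. -/
def IsWienerMeasure (W : Measure PathSpace) : Prop :=
  IsGaussianProcess W (fun s t => min (s : ℝ) (t : ℝ))

/-- `μ` is the law of fractional Brownian motion with Hurst parameter `H`. -/
def IsFBM (H : ℝ) (μ : Measure PathSpace) : Prop :=
  IsGaussianProcess μ (fun s t =>
    ((s : ℝ) ^ (2*H) + (t : ℝ) ^ (2*H) - |(t : ℝ) - (s : ℝ)| ^ (2*H)) / 2)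

/-- Clamping of a real number into the unit interval. -/
def clampI (t : ℝ) : unitInterval :=
  ⟨min (max t 0) 1, Set.mem_Icc.mpr ⟨le_min (le_max_right _ _) zero_le_one, min_le_right _ _⟩⟩

/-- The grid point `j/n` of the unit interval. -/
def gridPt (n j : ℕ) : unitInterval := clampI ((j : ℝ) / n)

/-- The discrete quadratic variation `Q_n(ω)`. -/
def Qvar (ω : PathSpace) (n : ℕ) : ℝ :=
  Real.sqrt ((1 / (n : ℝ)) *
    ∑ i ∈ Finset.range n, (ω.1 (gridPt n (i+1)) - ω.1 (gridPt n i)) ^ 2)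

/-- Lower Orey exponent `q^-(ω)`. -/
def oreyLower (ω : PathSpace) : EReal :=
  liminf (fun n : ℕ => ((-Real.log (Qvar ω n) / Real.log n : ℝ) : EReal)) atTop

/-- Upper Orey exponent `q^+(ω)`. -/
def oreyUpper (ω : PathSpace) : EReal :=
  limsup (fun n : ℕ => ((-Real.log (Qvar ω n) / Real.log n : ℝ) : EReal)) atTop

/-- The set `C_a` of `a`-Hölder paths. -/
def holderSet (a : ℝ) : Set PathSpace :=
  {ω | ∃ C : ℝ, ∀ x y : unitInterval, |ω.1 x - ω.1 y| ≤ C * |(x : ℝ) - (y : ℝ)| ^ a}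

/-- The set `C_a^- = ⋂_{0<b<a} C_b` of nearly `a`-Hölder paths. -/
def holderMinus (a : ℝ) : Set PathSpace := ⋂ b ∈ Set.Ioo (0:ℝ) a, holderSet b

/-- The set `C_q^crit` of critical `q`-Hölder paths: nearly `q`-Hölder paths whose
Orey exponent exists and equals `q`. -/
def holderCrit (q : ℝ) : Set PathSpace :=
  {ω | ω ∈ holderMinus q ∧ oreyLower ω = (q : EReal) ∧ oreyUpper ω = (q : EReal)}

/-- The set `Ω^crit` of critical Hölder paths. -/
def pathCrit : Set PathSpace := ⋃ q ∈ Set.Ioo (0:ℝ) 1, holderCrit q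

/-- The lower local order of a measure `μ` on path space at `ω`. -/
def lowerLocOrd (μ : Measure PathSpace) (ω : PathSpace) : EReal :=
  liminf (fun ε : ℝ =>
    ((Real.log (-Real.log ((μ (Metric.ball ω ε)).toReal)) / (-Real.log ε) : ℝ) : EReal))
    (𝓝[>] (0:ℝ))

/-- The upper local order of a measure `μ` on path space at `ω`. -/
def upperLocOrd (μ : Measure PathSpace) (ω : PathSpace) : EReal :=
  limsup (fun ε : ℝ =>
    ((Real.log (-Real.log ((μ (Metric.ball ω ε)).toReal)) / (-Real.log ε) : ℝ) : EReal))
    (𝓝[>] (0:ℝ))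

/-- The Hausdorff order of a set of paths: `sup {α > 0 : H^{h_α}(A) = ∞}` where
`h_α(ε) = exp(-ε^{-α})`. -/
def ordH (A : Set PathSpace) : ℝ≥0∞ :=
  ⨆ (α : ℝ) (_ : 0 < α ∧ hMeas (fun ε : ℝ => Real.exp (-(ε ^ (-α)))) A = ∞),
    ENNReal.ofReal α

/-- The level set `E(ξ)` of paths at which the local order of `μ` exists and
equals `ξ`. -/
def levelOrd (μ : Measure PathSpace) (ξ : ℝ) : Set PathSpace :=
  {ω | lowerLocOrd μ ω = (ξ : EReal) ∧ upperLocOrd μ ω = (ξ : EReal)}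

/-- The cylinder `C_n(ω̄, ε)` around `ω̄` of depth `n` and radius `ε`. -/
def cylinder (ωb : PathSpace) (n : ℕ) (ε : ℝ) : Set PathSpace :=
  {ω | ∀ j ∈ Finset.Icc 1 n, |ω.1 (gridPt n j) - ωb.1 (gridPt n j)| ≤ ε}

/-- The affine interpolation `L̄_j` of `ω̄` on `[(j-1)/n, j/n]`, evaluated at `t`. -/
def affInterp (ωb : PathSpace) (n j : ℕ) (t : ℝ) : ℝ :=
  ωb.1 (gridPt n (j-1)) +
    (t - ((j-1 : ℕ) : ℝ) / n) * n * (ωb.1 (gridPt n j) - ωb.1 (gridPt n (j-1)))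

/-- The maximal deviation `Δ_n(ω̄)` of `ω̄` from its chords on the `1/n`-grid. -/
def chordDev (ωb : PathSpace) (n : ℕ) : ℝ :=
  sSup {d : ℝ | ∃ j ∈ Finset.Icc 1 n, ∃ t ∈ Set.Icc (((j-1 : ℕ) : ℝ) / n) ((j : ℝ) / n),
    d = |ωb.1 (clampI t) - affInterp ωb n j t|}


open scoped ProbabilityTheory
open ProbabilityTheory (gaussianReal iIndepFun)

/-! ### Linear functionals of the coordinate process -/

/-- The evaluation functional at time `t`. -/
def coord (t : unitInterval) (ω : PathSpace) : ℝ := ω.1 t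

/-- The space of finite linear combinations of evaluation functionals. -/
def coordSpan : Submodule ℝ (PathSpace → ℝ) := Submodule.span ℝ (range coord)

lemma coord_mem_coordSpan (t : unitInterval) : coord t ∈ coordSpan :=
  Submodule.subset_span (mem_range_self t)

lemma continuous_coord (t : unitInterval) : Continuous (coord t) :=
  (continuous_eval_const t).comp continuous_subtype_val

lemma continuous_of_mem_coordSpan {f : PathSpace → ℝ} (hf : f ∈ coordSpan) : Continuous f := by
  induction hf using Submodule.span_induction with
  | mem x h => obtain ⟨t, rfl⟩ := h; exact continuous_coord t
  | zero => exact continuous_const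
  | add x y _ _ hx hy => exact hx.add hy
  | smul a x _ hx => exact hx.const_smul a

section GaussianProcess

variable {μ : Measure PathSpace} {K : unitInterval → unitInterval → ℝ}

lemma IsGaussianProcess.exists_map_eq_gaussianReal (hμ : IsGaussianProcess μ K)
    {f : PathSpace → ℝ} (hf : f ∈ coordSpan) : ∃ v, μ.map f = gaussianReal 0 v := by
  obtain ⟨c, rfl⟩ := Finsupp.mem_span_range_iff_exists_finsupp.1 hf
  let e := c.support.equivFin
  refine ⟨_, Eq.trans ?_ (hμ.2 _ (fun i => (e.symm i : unitInterval)) (fun i => c (e.symm i)))⟩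
  congr 1
  ext ω
  rw [e.symm.sum_comp (fun t => c t * ω.1 t),
    Finset.sum_coe_sort c.support (fun t => c t * ω.1 t)]
  simp [Finsupp.sum, coord]

/-- Any family of finite linear combinations of coordinates is a Gaussian process. -/
lemma IsGaussianProcess.isGaussianProcess_of_mem_coordSpan (hμ : IsGaussianProcess μ K)
    {S : Type*} {Y : S → PathSpace → ℝ} (hY : ∀ s, Y s ∈ coordSpan) :
    ProbabilityTheory.IsGaussianProcess Y μ where
  hasGaussianLaw I := by
    have hm : Measurable (fun ω ↦ I.restrict (Y · ω)) :=
      measurable_pi_lambda _ fun i => (continuous_of_mem_coordSpan (hY i)).measurable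
    constructor
    refine ProbabilityTheory.isGaussian_of_map_eq_gaussianReal fun L => ⟨0, ?_⟩
    classical
    rw [Measure.map_map L.continuous.measurable hm]
    refine hμ.exists_map_eq_gaussianReal ?_
    have : L ∘ (fun ω ↦ I.restrict (Y · ω)) =
        ∑ i : I, L (Pi.single i 1) • Y i := by
      ext ω
      simp only [Function.comp_apply, Finset.sum_apply, Pi.smul_apply, smul_eq_mul]
      conv_lhs => rw [pi_eq_sum_univ' (I.restrict fun x => Y x ω), map_sum]
      exact Finset.sum_congr rfl fun i _ => by simp [mul_comm, Pi.single]
    rw [this]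
    exact Submodule.sum_mem _ fun i _ => Submodule.smul_mem _ _ (hY i)

lemma IsGaussianProcess.memLp_two (hμ : IsGaussianProcess μ K) {f : PathSpace → ℝ}
    (hf : f ∈ coordSpan) : MemLp f 2 μ :=
  ((hμ.isGaussianProcess_of_mem_coordSpan (Y := fun _ : Unit => f) fun _ => hf).hasGaussianLaw_eval
    ()).memLp_two

/-- The law of an increment. -/
lemma IsGaussianProcess.map_sub (hμ : IsGaussianProcess μ K) (s t : unitInterval) :
    μ.map (coord t - coord s) =
      gaussianReal 0 (Real.toNNReal (K t t - K t s - K s t + K s s)) := by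
  have h := hμ.2 2 ![t, s] ![1, -1]
  have h1 : (fun ω : PathSpace => ∑ i, (![1, -1] : Fin 2 → ℝ) i * ω.1 (![t, s] i)) =
      coord t - coord s := by
    ext ω; simp [coord, Fin.sum_univ_two]; ring
  rw [h1] at h
  rw [h]
  congr 2
  simp [Fin.sum_univ_two]; ring

lemma IsGaussianProcess.map_coord (hμ : IsGaussianProcess μ K) (t : unitInterval) :
    μ.map (coord t) = gaussianReal 0 (Real.toNNReal (K t t)) := by
  simpa using! hμ.2 1 ![t] ![1]

lemma variance_of_map_eq {f : PathSpace → ℝ} (hf : f ∈ coordSpan) {v : ℝ≥0}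
    (h : μ.map f = gaussianReal 0 v) : Var[f; μ] = v := by
  rw [← ProbabilityTheory.variance_id_gaussianReal (μ := 0) (v := v), ← h,
    ProbabilityTheory.variance_id_map (continuous_of_mem_coordSpan hf).measurable.aemeasurable]

end GaussianProcess

/-- The law of an increment of fractional Brownian motion. -/
lemma IsFBM.map_sub {H : ℝ} (hH : 0 < H) {μ : Measure PathSpace} (hμ : IsFBM H μ)
    (s t : unitInterval) :
    μ.map (coord t - coord s) =
      gaussianReal 0 (Real.toNNReal (|(t : ℝ) - s| ^ (2 * H))) := by
  rw [IsGaussianProcess.map_sub hμ s t]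
  congr 2
  rw [sub_self, sub_self, abs_zero, Real.zero_rpow (by positivity), abs_sub_comm (s : ℝ)]
  ring

/-- Brownian motion is fractional Brownian motion of Hurst parameter `1/2`. -/
lemma IsWienerMeasure.isFBM {W : Measure PathSpace} (hW : IsWienerMeasure W) : IsFBM (1 / 2) W := by
  have : (fun s t : unitInterval => min (s : ℝ) (t : ℝ)) = fun s t : unitInterval =>
    ((s : ℝ) ^ (2 * (1 / 2 : ℝ)) + (t : ℝ) ^ (2 * (1 / 2 : ℝ)) -
      |(t : ℝ) - (s : ℝ)| ^ (2 * (1 / 2 : ℝ))) / 2 := by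
    ext s t
    norm_num
    rcases le_total (s : ℝ) t with h | h
    · rw [min_eq_left h, abs_of_nonneg (by linarith)]; ring
    · rw [min_eq_right h, abs_of_nonpos (by linarith)]; ring
  unfold IsFBM
  rw [← this]
  exact hW

lemma IsWienerMeasure.covariance_coord {W : Measure PathSpace} (hW : IsWienerMeasure W)
    (s t : unitInterval) : cov[coord s, coord t; W] = min (s : ℝ) t := by
  have := hW.1
  have hs := hW.memLp_two (coord_mem_coordSpan s)
  have ht := hW.memLp_two (coord_mem_coordSpan t)
  have h := ProbabilityTheory.variance_sub ht hs
  rw [variance_of_map_eq (Submodule.sub_mem _ (coord_mem_coordSpan t) (coord_mem_coordSpan s))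
      (hW.isFBM.map_sub (by norm_num) s t),
    variance_of_map_eq (coord_mem_coordSpan s) (hW.map_coord s),
    variance_of_map_eq (coord_mem_coordSpan t) (hW.map_coord t),
    ProbabilityTheory.covariance_comm, min_self, min_self, Real.coe_toNNReal _ s.2.1,
    Real.coe_toNNReal _ t.2.1] at h
  norm_num at h
  rcases le_total (s : ℝ) t with h' | h'
  · rw [min_eq_left h']; rw [abs_of_nonneg (by linarith)] at h; linarith
  · rw [min_eq_right h']; rw [abs_of_nonpos (by linarith)] at h; linarith

/-! ### Estimates for real Gaussian measures -/

lemma gaussianReal_Icc_le {v : ℝ≥0} (hv : v ≠ 0) (a b : ℝ) :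
    gaussianReal 0 v (Icc a b) ≤ ENNReal.ofReal ((b - a) / (2 * √v)) := by
  have hv' : 0 < (v : ℝ) := by positivity
  rw [ProbabilityTheory.gaussianReal_apply 0 hv]
  calc ∫⁻ x in Icc a b, ProbabilityTheory.gaussianPDF 0 v x
      ≤ ∫⁻ _ in Icc a b, ENNReal.ofReal (2 * √v)⁻¹ := by
        refine lintegral_mono fun x => ENNReal.ofReal_le_ofReal ?_
        rw [ProbabilityTheory.gaussianPDFReal]
        have h1 : (√(2 * Real.pi * v))⁻¹ ≤ (2 * √v)⁻¹ := by
          refine inv_anti₀ (by positivity) ?_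
          rw [show 2 * √(v : ℝ) = √(2 ^ 2 * v) by
            rw [Real.sqrt_mul (by positivity), Real.sqrt_sq (by norm_num)]]
          exact Real.sqrt_le_sqrt (by nlinarith [Real.pi_gt_three])
        have h2 : Real.exp (-(x - 0) ^ 2 / (2 * v)) ≤ 1 := by
          rw [Real.exp_le_one_iff]
          exact div_nonpos_of_nonpos_of_nonneg (by nlinarith [sq_nonneg (x - 0)]) (by positivity)
        calc _ ≤ (2 * √(v : ℝ))⁻¹ * 1 :=
              mul_le_mul h1 h2 (Real.exp_pos _).le (by positivity)
          _ = _ := mul_one _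
    _ = ENNReal.ofReal ((b - a) / (2 * √v)) := by
        rw [lintegral_const, Measure.restrict_apply_univ, Real.volume_Icc,
          ← ENNReal.ofReal_mul (by positivity), div_eq_inv_mul]

lemma le_gaussianReal_Icc {v : ℝ≥0} (hv : v ≠ 0) (a r : ℝ) :
    ENNReal.ofReal (r / (2 * √v) * Real.exp (-(|a| + r) ^ 2 / (2 * v))) ≤
      gaussianReal 0 v (Icc (a - r) (a + r)) := by
  have hv' : 0 < (v : ℝ) := by positivity
  rw [ProbabilityTheory.gaussianReal_apply 0 hv]
  calc ENNReal.ofReal (r / (2 * √v) * Real.exp (-(|a| + r) ^ 2 / (2 * v)))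
      = ∫⁻ _ in Icc (a - r) (a + r),
          ENNReal.ofReal ((4 * √v)⁻¹ * Real.exp (-(|a| + r) ^ 2 / (2 * v))) := by
        rw [lintegral_const, Measure.restrict_apply_univ, Real.volume_Icc,
          ← ENNReal.ofReal_mul (by positivity)]
        congr 1
        field_simp
        ring
    _ ≤ ∫⁻ x in Icc (a - r) (a + r), ProbabilityTheory.gaussianPDF 0 v x := by
        refine setLIntegral_mono (ProbabilityTheory.measurable_gaussianPDF 0 v) fun x hx =>
          ENNReal.ofReal_le_ofReal ?_
        rw [ProbabilityTheory.gaussianPDFReal]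
        have h1 : (4 * √v)⁻¹ ≤ (√(2 * Real.pi * v))⁻¹ := by
          refine inv_anti₀ (by have := Real.pi_pos; positivity) ?_
          rw [show 4 * √(v : ℝ) = √(4 ^ 2 * v) by
            rw [Real.sqrt_mul (by positivity), Real.sqrt_sq (by norm_num)]]
          exact Real.sqrt_le_sqrt (by nlinarith [Real.pi_lt_four])
        have h3 : |x| ≤ |a| + r := by
          rw [abs_le]
          constructor <;> linarith [hx.1, hx.2, le_abs_self a, neg_abs_le a]
        have h2 : Real.exp (-(|a| + r) ^ 2 / (2 * v)) ≤ Real.exp (-(x - 0) ^ 2 / (2 * v)) := by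
          refine Real.exp_le_exp.2 ((div_le_div_iff_of_pos_right (by positivity)).2 ?_)
          rw [sub_zero, neg_le_neg_iff, ← sq_abs x]
          exact pow_le_pow_left₀ (abs_nonneg x) h3 2
        exact mul_le_mul h1 h2 (Real.exp_pos _).le (by positivity)

lemma gaussianReal_Ici_le {v : ℝ≥0} (hv : v ≠ 0) {x : ℝ} (hx : 0 ≤ x) :
    gaussianReal 0 v (Ici x) ≤ ENNReal.ofReal (Real.exp (-x ^ 2 / (2 * v))) := by
  have hv' : 0 < (v : ℝ) := by positivity
  have h := ProbabilityTheory.measure_ge_le_exp_mul_mgf (X := id) (μ := gaussianReal 0 v)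
    (t := x / v) x (by positivity) (ProbabilityTheory.integrable_exp_mul_gaussianReal _)
  rw [ProbabilityTheory.mgf_id_gaussianReal, ← Real.exp_add] at h
  have h' : -(x / v) * x + (0 * (x / v) + v * (x / v) ^ 2 / 2) = -x ^ 2 / (2 * v) := by
    field_simp; ring
  rw [h'] at h
  exact (ENNReal.le_ofReal_iff_toReal_le (measure_ne_top _ _) (Real.exp_pos _).le).2 h

lemma gaussianReal_Iic_le {v : ℝ≥0} (hv : v ≠ 0) {x : ℝ} (hx : 0 ≤ x) :
    gaussianReal 0 v (Iic (-x)) ≤ ENNReal.ofReal (Real.exp (-x ^ 2 / (2 * v))) := by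
  have h := ProbabilityTheory.gaussianReal_map_neg (μ := 0) (v := v)
  rw [neg_zero] at h
  rw [← h, Measure.map_apply measurable_neg measurableSet_Iic]
  simpa using! gaussianReal_Ici_le hv hx

lemma gaussianReal_abs_gt_le {v : ℝ≥0} (hv : v ≠ 0) {x : ℝ} (hx : 0 ≤ x) :
    gaussianReal 0 v {y | x < |y|} ≤ ENNReal.ofReal (2 * Real.exp (-x ^ 2 / (2 * v))) := by
  rw [two_mul, ENNReal.ofReal_add (Real.exp_pos _).le (Real.exp_pos _).le]
  refine le_trans (measure_mono ?_) ((measure_union_le (Ici x) (Iic (-x))).trans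
    (add_le_add (gaussianReal_Ici_le hv hx) (gaussianReal_Iic_le hv hx)))
  intro y hy
  rcases lt_abs.1 (show x < |y| from hy) with h | h
  · exact Or.inl h.le
  · exact Or.inr (by rw [mem_Iic]; linarith)

/-! ### Dyadic increments -/

/-- The increment of a path over the `j`-th cell of the `1/n`-grid. -/
def incr (n j : ℕ) : PathSpace → ℝ := coord (gridPt n (j + 1)) - coord (gridPt n j)

lemma incr_mem_coordSpan (n j : ℕ) : incr n j ∈ coordSpan :=
  Submodule.sub_mem _ (coord_mem_coordSpan _) (coord_mem_coordSpan _)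

lemma continuous_incr (n j : ℕ) : Continuous (incr n j) :=
  continuous_of_mem_coordSpan (incr_mem_coordSpan n j)

lemma measurable_incr (n j : ℕ) : Measurable (incr n j) := (continuous_incr n j).measurable

lemma coe_clampI {t : ℝ} (h0 : 0 ≤ t) (h1 : t ≤ 1) : (clampI t : ℝ) = t := by
  simp [clampI, h0, h1]

lemma coe_gridPt {n j : ℕ} (hj : j ≤ n) : (gridPt n j : ℝ) = j / n :=
  coe_clampI (by positivity) (div_le_one_of_le₀ (by exact_mod_cast hj) (by positivity))

lemma IsFBM.map_incr {H : ℝ} (hH : 0 < H) {μ : Measure PathSpace} (hμ : IsFBM H μ) {n j : ℕ}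
    (hj : j < n) :
    μ.map (incr n j) = gaussianReal 0 (Real.toNNReal ((1 / n : ℝ) ^ (2 * H))) := by
  have hn : (0 : ℝ) < n := by exact_mod_cast (by omega : 0 < n)
  rw [incr, hμ.map_sub hH, coe_gridPt hj, coe_gridPt hj.le, ← sub_div, abs_div]
  push_cast
  simp

lemma IsFBM.map_incr_two_pow {H : ℝ} (hH : 0 < H) {μ : Measure PathSpace} (hμ : IsFBM H μ)
    {m j : ℕ} (hj : j < 2 ^ m) :
    μ.map (incr (2 ^ m) j) = gaussianReal 0 (Real.toNNReal ((((1 / 2 : ℝ) ^ H) ^ m) ^ 2)) := by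
  rw [hμ.map_incr hH hj]
  congr 2
  rw [← pow_mul, ← Real.rpow_natCast, ← Real.rpow_mul (by norm_num), Nat.cast_pow, Nat.cast_ofNat,
    ← one_div_pow, ← Real.rpow_natCast, ← Real.rpow_mul (by norm_num)]
  push_cast
  ring_nf

lemma ae_eventually_notMem_of_le {α : Type*} [MeasurableSpace α] {μ : Measure α}
    {s : ℕ → Set α} {f : ℕ → ℝ} (hf : Summable f)
    (h : ∀ᶠ m in atTop, μ (s m) ≤ ENNReal.ofReal (f m)) :
    ∀ᵐ x ∂μ, ∀ᶠ m in atTop, x ∉ s m := by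
  obtain ⟨N, hN⟩ := eventually_atTop.1 h
  have hsum : ∑' m, μ (s (m + N)) ≠ ∞ := by
    refine ne_top_of_le_ne_top ?_ (ENNReal.tsum_le_tsum fun m => hN (m + N) (by omega))
    exact ((summable_nat_add_iff N).2 hf).tsum_ofReal_ne_top
  filter_upwards [ae_eventually_notMem hsum] with x hx
  obtain ⟨M, hM⟩ := eventually_atTop.1 hx
  refine eventually_atTop.2 ⟨M + N, fun m hm => ?_⟩
  have := hM (m - N) (by omega)
  rwa [Nat.sub_add_cancel (by omega)] at this

/-- Dyadic increments at level `m` are bounded by `C r ^ m`. -/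
def DyadicHolder (r C : ℝ) (ω : PathSpace) : Prop :=
  ∀ m, ∀ k < 2 ^ m, |incr (2 ^ m) k ω| ≤ C * r ^ m

lemma DyadicHolder.mono {r C C' : ℝ} (hr : 0 ≤ r) (hC : C ≤ C') {ω : PathSpace}
    (h : DyadicHolder r C ω) : DyadicHolder r C' ω := fun m k hk =>
  (h m k hk).trans (mul_le_mul_of_nonneg_right hC (by positivity))

lemma exists_dyadicHolder_of_eventually {r : ℝ} (hr : 0 < r) {ω : PathSpace}
    (h : ∀ᶠ m in atTop, ∀ k < 2 ^ m, |incr (2 ^ m) k ω| ≤ r ^ m) : ∃ C, DyadicHolder r C ω := by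
  obtain ⟨N, hN⟩ := eventually_atTop.1 h
  set g : ℕ → ℕ → ℝ := fun m k => |incr (2 ^ m) k ω| / r ^ m
  have hg : ∀ m k, 0 ≤ g m k := fun m k => by positivity
  have hG : ∀ m, 0 ≤ ∑ k ∈ Finset.range (2 ^ m), g m k := fun m =>
    Finset.sum_nonneg fun k _ => hg m k
  refine ⟨1 + ∑ m ∈ Finset.range N, ∑ k ∈ Finset.range (2 ^ m), g m k, fun m k hk => ?_⟩
  rw [← div_le_iff₀ (by positivity)]
  have hS : 0 ≤ ∑ m ∈ Finset.range N, ∑ k ∈ Finset.range (2 ^ m), g m k :=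
    Finset.sum_nonneg fun m _ => hG m
  rcases lt_or_ge m N with hm | hm
  · have h1 := Finset.single_le_sum (f := fun m => ∑ k ∈ Finset.range (2 ^ m), g m k)
      (fun m _ => hG m) (Finset.mem_range.2 hm)
    have h2 := Finset.single_le_sum (f := g m) (fun k _ => hg m k) (Finset.mem_range.2 hk)
    have h3 : |incr (2 ^ m) k ω| / r ^ m = g m k := rfl
    linarith
  · have h1 : |incr (2 ^ m) k ω| / r ^ m ≤ 1 := div_le_one_of_le₀ (hN m hm k hk) (by positivity)
    linarith

lemma exp_neg_two_le : Real.exp (-2) ≤ 1 / 4 := by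
  rw [Real.exp_neg, ← one_div]
  have : Real.exp 2 = Real.exp 1 * Real.exp 1 := by rw [← Real.exp_add]; norm_num
  have h1 := Real.add_one_le_exp (1 : ℝ)
  exact one_div_le_one_div_of_le (by norm_num) (by nlinarith)

lemma eventually_two_pow_mul_exp_le {q : ℝ} (hq : 1 < q) :
    ∀ᶠ m : ℕ in atTop, (2 : ℝ) ^ m * (2 * Real.exp (-q ^ m / 2)) ≤ 2 * (1 / 2) ^ m := by
  have h := tendsto_pow_const_div_const_pow_of_one_lt 1 hq
  filter_upwards [h.eventually (gt_mem_nhds (show (0 : ℝ) < 1 / 4 by norm_num))] with m hm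
  have hq0 : 0 < q ^ m := by positivity
  rw [pow_one, div_lt_iff₀ hq0] at hm
  have h1 : Real.exp (-q ^ m / 2) ≤ (Real.exp (-2)) ^ m := by
    rw [← Real.exp_nat_mul]
    exact Real.exp_le_exp.2 (by linarith)
  have h3 : Real.exp (-q ^ m / 2) ≤ (1 / 4) ^ m :=
    h1.trans (pow_le_pow_left₀ (Real.exp_pos _).le exp_neg_two_le m)
  calc (2 : ℝ) ^ m * (2 * Real.exp (-q ^ m / 2)) ≤ 2 ^ m * (2 * (1 / 4) ^ m) := by gcongr
    _ = 2 * (2 * (1 / 4)) ^ m := by rw [mul_pow]; ring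
    _ = 2 * (1 / 2) ^ m := by norm_num

/-- Almost sure Hölder regularity of fractional Brownian motion on dyadic points. -/
lemma IsFBM.ae_exists_dyadicHolder {H : ℝ} (hH : 0 < H) {μ : Measure PathSpace} (hμ : IsFBM H μ)
    {r : ℝ} (hr : (1 / 2 : ℝ) ^ H < r) : ∀ᵐ ω ∂μ, ∃ C, DyadicHolder r C ω := by
  set s : ℝ := (1 / 2 : ℝ) ^ H with hs
  have hs0 : 0 < s := by positivity
  have hr0 : 0 < r := hs0.trans hr
  have hq : 1 < (r / s) ^ 2 := one_lt_pow₀ ((one_lt_div hs0).2 hr) (by norm_num)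
  have key := ae_eventually_notMem_of_le (μ := μ)
    (s := fun m => ⋃ k ∈ Finset.range (2 ^ m), incr (2 ^ m) k ⁻¹' {y | r ^ m < |y|})
    (f := fun m => 2 * (1 / 2) ^ m)
    ((summable_geometric_of_lt_one (by norm_num) (by norm_num)).mul_left 2) (by
      filter_upwards [eventually_two_pow_mul_exp_le hq] with m hm
      refine le_trans ?_ (ENNReal.ofReal_le_ofReal hm)
      refine (measure_biUnion_finset_le _ _).trans ?_
      have hb : ∀ k ∈ Finset.range (2 ^ m), μ (incr (2 ^ m) k ⁻¹' {y | r ^ m < |y|}) ≤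
          ENNReal.ofReal (2 * Real.exp (-((r / s) ^ 2) ^ m / 2)) := fun k hk => by
        have hms : MeasurableSet {y : ℝ | r ^ m < |y|} :=
          (isOpen_lt continuous_const continuous_abs).measurableSet
        rw [← Measure.map_apply (measurable_incr _ _) hms,
          hμ.map_incr_two_pow hH (Finset.mem_range.1 hk)]
        have hv : (0 : ℝ) < (s ^ m) ^ 2 := by positivity
        refine (gaussianReal_abs_gt_le (Real.toNNReal_pos.2 hv).ne' (by positivity)).trans_eq ?_
        rw [Real.coe_toNNReal _ hv.le]
        congr 3
        rw [div_pow, div_pow]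
        field_simp
        ring
      refine (Finset.sum_le_card_nsmul _ _ _ hb).trans_eq ?_
      rw [Finset.card_range, nsmul_eq_mul, ENNReal.ofReal_mul (by positivity : (0:ℝ) ≤ 2 ^ m),
        ENNReal.ofReal_pow (by norm_num)]
      norm_num)
  filter_upwards [key] with ω hω
  refine exists_dyadicHolder_of_eventually hr0 ?_
  filter_upwards [hω] with m hm k hk
  by_contra! h
  exact hm (mem_biUnion (Finset.mem_coe.2 (Finset.mem_range.2 hk)) h)

/-! ### Piecewise linear interpolation -/

lemma floor_mul_le (n : ℕ) (t : unitInterval) : ⌊n * (t : ℝ)⌋₊ ≤ n :=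
  Nat.floor_le_of_le (mul_le_of_le_one_right (by positivity) t.2.2)

/-- The last point of the `1/n`-grid before `t`. -/
def gridFloor (n : ℕ) (t : unitInterval) : unitInterval := gridPt n ⌊n * (t : ℝ)⌋₊

lemma coe_gridFloor (n : ℕ) (t : unitInterval) : (gridFloor n t : ℝ) = ⌊n * (t : ℝ)⌋₊ / n :=
  coe_gridPt (floor_mul_le n t)

lemma abs_gridFloor_sub_le {n : ℕ} (hn : 0 < n) (t : unitInterval) :
    |(gridFloor n t : ℝ) - t| ≤ 1 / n := by
  have hn' : (0 : ℝ) < n := by exact_mod_cast hn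
  have h1 := Nat.floor_le (mul_nonneg hn'.le t.2.1)
  have h2 := Nat.lt_floor_add_one (n * (t : ℝ))
  rw [coe_gridFloor, abs_le]
  constructor
  · rw [neg_le_sub_iff_le_add, ← add_div, le_div_iff₀ hn']
    linarith
  · have : (⌊n * (t : ℝ)⌋₊ : ℝ) / n ≤ t := by rw [div_le_iff₀ hn']; linarith
    have : (0 : ℝ) ≤ 1 / n := by positivity
    linarith

lemma tendsto_gridFloor_two_pow (t : unitInterval) :
    Tendsto (fun m : ℕ => gridFloor (2 ^ m) t) atTop (𝓝 t) := by
  rw [tendsto_subtype_rng, tendsto_iff_dist_tendsto_zero]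
  refine squeeze_zero (fun _ => dist_nonneg) (fun m => abs_gridFloor_sub_le (by positivity) t) ?_
  have := tendsto_pow_atTop_nhds_zero_of_lt_one (r := (1 / 2 : ℝ)) (by norm_num) (by norm_num)
  simpa using this

lemma gridPt_two_pow_succ (m k : ℕ) : gridPt (2 ^ (m + 1)) (2 * k) = gridPt (2 ^ m) k := by
  rw [gridPt, gridPt]
  congr 1
  push_cast
  rw [pow_succ']
  field_simp

lemma floor_two_mul_cases {x : ℝ} (hx : 0 ≤ x) :
    ⌊2 * x⌋₊ = 2 * ⌊x⌋₊ ∨ ⌊2 * x⌋₊ = 2 * ⌊x⌋₊ + 1 := by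
  have h1 := Nat.floor_le hx
  have h2 := Nat.lt_floor_add_one x
  have h3 : 2 * ⌊x⌋₊ ≤ ⌊2 * x⌋₊ := Nat.le_floor (by push_cast; linarith)
  have h4 : ⌊2 * x⌋₊ < 2 * ⌊x⌋₊ + 2 := (Nat.floor_lt (by positivity)).2 (by push_cast; linarith)
  omega

lemma DyadicHolder.nonneg {r C : ℝ} {ω : PathSpace} (h : DyadicHolder r C ω) : 0 ≤ C := by
  have := (abs_nonneg _).trans (h 0 0 (by norm_num))
  simpa using this

lemma DyadicHolder.dist_gridFloor_succ_le {r C : ℝ} (hr : 0 < r) (hr1 : r < 1) {ω : PathSpace}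
    (h : DyadicHolder r C ω) (m : ℕ) (t : unitInterval) :
    dist (ω.1 (gridFloor (2 ^ m) t)) (ω.1 (gridFloor (2 ^ (m + 1)) t)) ≤ C * r ^ m := by
  have hC := h.nonneg
  have hx : (((2 ^ (m + 1) : ℕ) : ℝ) * t) = 2 * ((2 ^ m : ℕ) * t) := by push_cast; ring
  have hle := floor_mul_le (2 ^ (m + 1)) t
  rw [gridFloor, gridFloor]
  rw [hx] at hle ⊢
  generalize hk : ⌊((2 ^ m : ℕ) : ℝ) * t⌋₊ = k
  rcases floor_two_mul_cases (mul_nonneg (Nat.cast_nonneg (2 ^ m)) t.2.1) with h2 | h2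
  · rw [h2, hk, gridPt_two_pow_succ, dist_self]
    positivity
  · rw [h2, hk] at hle
    rw [h2, hk, dist_comm, ← gridPt_two_pow_succ m k]
    have h3 : dist (ω.1 (gridPt (2 ^ (m + 1)) (2 * k + 1))) (ω.1 (gridPt (2 ^ (m + 1)) (2 * k))) ≤
        C * r ^ (m + 1) := h (m + 1) (2 * k) (by omega)
    refine h3.trans ?_
    rw [pow_succ]
    exact mul_le_mul_of_nonneg_left (mul_le_of_le_one_right (by positivity) hr1.le) hC

lemma DyadicHolder.abs_sub_gridFloor_le {r C : ℝ} (hr : 0 < r) (hr1 : r < 1) {ω : PathSpace}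
    (h : DyadicHolder r C ω) (m : ℕ) (t : unitInterval) :
    |ω.1 t - ω.1 (gridFloor (2 ^ m) t)| ≤ C * r ^ m / (1 - r) := by
  rw [abs_sub_comm]
  exact dist_le_of_le_geometric_of_tendsto r C hr1
    (fun m => h.dist_gridFloor_succ_le hr hr1 m t)
    ((ω.1.continuous.tendsto t).comp (tendsto_gridFloor_two_pow t)) m

/-- The value at `t` of the piecewise linear interpolation of a path on the `1/n`-grid. -/
def interp (n : ℕ) (t : unitInterval) : PathSpace → ℝ :=
  coord (gridFloor n t) + (n * (t : ℝ) - ⌊n * (t : ℝ)⌋₊) • incr n ⌊n * (t : ℝ)⌋₊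

/-- The deviation at `t` of a path from its piecewise linear interpolation on the `1/n`-grid. -/
def bridge (n : ℕ) (t : unitInterval) : PathSpace → ℝ := coord t - interp n t

lemma bridge_mem_coordSpan (n : ℕ) (t : unitInterval) : bridge n t ∈ coordSpan :=
  Submodule.sub_mem _ (coord_mem_coordSpan _) (Submodule.add_mem _ (coord_mem_coordSpan _)
    (Submodule.smul_mem _ _ (incr_mem_coordSpan _ _)))

lemma mul_sub_floor_nonneg (n : ℕ) (t : unitInterval) :
    0 ≤ n * (t : ℝ) - ⌊n * (t : ℝ)⌋₊ :=
  sub_nonneg.2 (Nat.floor_le (mul_nonneg n.cast_nonneg t.2.1))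

lemma mul_sub_floor_le_one (n : ℕ) (t : unitInterval) :
    n * (t : ℝ) - ⌊n * (t : ℝ)⌋₊ ≤ 1 := by
  have := Nat.lt_floor_add_one (n * (t : ℝ))
  linarith

lemma mul_sub_floor_eq_zero {n : ℕ} {t : unitInterval} (h : n ≤ ⌊n * (t : ℝ)⌋₊) :
    n * (t : ℝ) - ⌊n * (t : ℝ)⌋₊ = 0 := by
  refine le_antisymm ?_ (mul_sub_floor_nonneg n t)
  have h1 : (n : ℝ) ≤ ⌊n * (t : ℝ)⌋₊ := by exact_mod_cast h
  have h2 : n * (t : ℝ) ≤ n := mul_le_of_le_one_right n.cast_nonneg t.2.2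
  linarith

lemma DyadicHolder.abs_bridge_le {r C : ℝ} (hr : 0 < r) (hr1 : r < 1) {ω : PathSpace}
    (h : DyadicHolder r C ω) (m : ℕ) (t : unitInterval) :
    |bridge (2 ^ m) t ω| ≤ 2 * C / (1 - r) * r ^ m := by
  have hC := h.nonneg
  have h1 := h.abs_sub_gridFloor_le hr hr1 m t
  have h2 : |((2 ^ m : ℕ) * (t : ℝ) - ⌊(2 ^ m : ℕ) * (t : ℝ)⌋₊) *
      incr (2 ^ m) ⌊(2 ^ m : ℕ) * (t : ℝ)⌋₊ ω| ≤ C * r ^ m := by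
    rcases lt_or_ge ⌊(2 ^ m : ℕ) * (t : ℝ)⌋₊ (2 ^ m) with hk | hk
    · rw [abs_mul, abs_of_nonneg (mul_sub_floor_nonneg _ t)]
      exact (mul_le_of_le_one_left (abs_nonneg _) (mul_sub_floor_le_one _ t)).trans (h m _ hk)
    · rw [mul_sub_floor_eq_zero hk, zero_mul, abs_zero]
      positivity
  have h3 : C * r ^ m ≤ C * r ^ m / (1 - r) :=
    le_div_self (by positivity) (by linarith) (by linarith)
  calc |bridge (2 ^ m) t ω| = |(ω.1 t - ω.1 (gridFloor (2 ^ m) t)) -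
        ((2 ^ m : ℕ) * (t : ℝ) - ⌊(2 ^ m : ℕ) * (t : ℝ)⌋₊) *
          incr (2 ^ m) ⌊(2 ^ m : ℕ) * (t : ℝ)⌋₊ ω| := by
        simp only [bridge, interp, coord, Pi.sub_apply, Pi.add_apply, Pi.smul_apply, smul_eq_mul]
        ring_nf
    _ ≤ C * r ^ m / (1 - r) + C * r ^ m / (1 - r) := (abs_sub _ _).trans (by linarith)
    _ = 2 * C / (1 - r) * r ^ m := by ring

lemma coord_gridPt_eq_sum {n j : ℕ} (ω : PathSpace) :
    ω.1 (gridPt n j) = ∑ i ∈ Finset.range j, incr n i ω := by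
  have h0 : gridPt n 0 = 0 := by
    apply Subtype.ext
    simp [coe_gridPt (Nat.zero_le n)]
  have := Finset.sum_range_sub (fun i => ω.1 (gridPt n i)) j
  rw [h0, ω.2, sub_zero] at this
  exact this.symm

lemma abs_interp_sub_le {n : ℕ} {s : ℝ} {ω ω' : PathSpace}
    (h : ∀ j < n, |incr n j ω - incr n j ω'| ≤ s) (t : unitInterval) :
    |interp n t ω - interp n t ω'| ≤ n * s := by
  set k := ⌊n * (t : ℝ)⌋₊ with hk
  have hkn : k ≤ n := floor_mul_le n t
  have h1 : |ω.1 (gridPt n k) - ω'.1 (gridPt n k)| ≤ k * s := by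
    rw [coord_gridPt_eq_sum, coord_gridPt_eq_sum, ← Finset.sum_sub_distrib]
    refine (Finset.abs_sum_le_sum_abs _ _).trans ?_
    refine (Finset.sum_le_card_nsmul _ _ s fun i hi => h i ?_).trans_eq (by simp)
    exact (Finset.mem_range.1 hi).trans_le hkn
  have h2 : |(n * (t : ℝ) - k) * (incr n k ω - incr n k ω')| ≤ (n - k) * s := by
    rcases hkn.lt_or_eq with hlt | heq
    · have hs : 0 ≤ s := (abs_nonneg _).trans (h k hlt)
      have h3 : (1 : ℝ) ≤ n - k := by
        have : ((k + 1 : ℕ) : ℝ) ≤ n := by exact_mod_cast hlt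
        push_cast at this
        linarith
      rw [abs_mul, abs_of_nonneg (mul_sub_floor_nonneg _ t)]
      refine (mul_le_of_le_one_left (abs_nonneg _) (mul_sub_floor_le_one _ t)).trans ?_
      exact (h k hlt).trans (le_mul_of_one_le_left hs h3)
    · rw [mul_sub_floor_eq_zero heq.ge, zero_mul, abs_zero, heq, sub_self, zero_mul]
  calc |interp n t ω - interp n t ω'| = |(ω.1 (gridPt n k) - ω'.1 (gridPt n k)) +
        (n * (t : ℝ) - k) * (incr n k ω - incr n k ω')| := by
        simp only [interp, coord, gridFloor, Pi.add_apply, Pi.smul_apply, smul_eq_mul, ← hk]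
        ring_nf
    _ ≤ n * s := (abs_add_le _ _).trans (by linarith)

/-- A path is close to `ω'` as soon as its bridge part is small on a dense set and its increments
are close to those of `ω'`. -/
lemma dist_le_of_bridge_of_incr {n : ℕ} {s D D' : ℝ} {ω ω' : PathSpace}
    (hω : ∀ i, |bridge n (TopologicalSpace.denseSeq unitInterval i) ω| ≤ D)
    (hω' : ∀ t, |bridge n t ω'| ≤ D')
    (h : ∀ j < n, |incr n j ω - incr n j ω'| ≤ s) : dist ω ω' ≤ D + D' + n * s := by
  have key : ∀ i, |ω.1 (TopologicalSpace.denseSeq unitInterval i) -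
      ω'.1 (TopologicalSpace.denseSeq unitInterval i)| ≤ D + D' + n * s := fun i => by
    set t := TopologicalSpace.denseSeq unitInterval i
    calc |ω.1 t - ω'.1 t| = |(bridge n t ω - bridge n t ω') +
          (interp n t ω - interp n t ω')| := by
          simp only [bridge, coord, Pi.sub_apply]
          ring_nf
      _ ≤ |bridge n t ω - bridge n t ω'| + |interp n t ω - interp n t ω'| := abs_add_le _ _
      _ ≤ D + D' + n * s :=
          add_le_add ((abs_sub _ _).trans (add_le_add (hω i) (hω' t))) (abs_interp_sub_le h t)
  have hall : ∀ t, |ω.1 t - ω'.1 t| ≤ D + D' + n * s := by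
    have hc : IsClosed {t | |ω.1 t - ω'.1 t| ≤ D + D' + n * s} :=
      isClosed_le (by fun_prop) continuous_const
    intro t
    have ht := (TopologicalSpace.denseRange_denseSeq unitInterval) t
    exact (closure_minimal (range_subset_iff.2 key) hc) ht
  exact (ContinuousMap.dist_le ((abs_nonneg _).trans (hall 0))).2 hall

/-! ### Independence of the increments and of the bridge under the Wiener measure -/

section Wiener

variable {W : Measure PathSpace} {n : ℕ}

lemma IsWienerMeasure.isProbabilityMeasure (hW : IsWienerMeasure W) : IsProbabilityMeasure W :=
  hW.1

lemma IsWienerMeasure.covariance_coord_incr (hW : IsWienerMeasure W) (t : unitInterval) {j : ℕ}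
    (hj : j < n) :
    cov[coord t, incr n j; W] = min (t : ℝ) ((j + 1) / n) - min (t : ℝ) (j / n) := by
  have := hW.isProbabilityMeasure
  have hL := fun s => IsGaussianProcess.memLp_two hW (coord_mem_coordSpan s)
  rw [incr, ProbabilityTheory.covariance_sub_right (hL _) (hL _) (hL _), hW.covariance_coord,
    hW.covariance_coord, coe_gridPt hj, coe_gridPt hj.le]
  push_cast
  rfl

lemma IsWienerMeasure.covariance_coord_incr_of_le (hW : IsWienerMeasure W) {t : unitInterval}
    {j : ℕ} (hj : j < n) (ht : (t : ℝ) ≤ j / n) : cov[coord t, incr n j; W] = 0 := by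
  have h : (j : ℝ) / n ≤ (j + 1) / n := by gcongr; linarith
  rw [hW.covariance_coord_incr t hj, min_eq_left ht, min_eq_left (ht.trans h), sub_self]

lemma IsWienerMeasure.covariance_coord_incr_of_ge (hW : IsWienerMeasure W) {t : unitInterval}
    {j : ℕ} (hj : j < n) (ht : (j + 1) / n ≤ (t : ℝ)) : cov[coord t, incr n j; W] = 1 / n := by
  have h : (j : ℝ) / n ≤ (j + 1) / n := by gcongr; linarith
  rw [hW.covariance_coord_incr t hj, min_eq_right ht, min_eq_right (h.trans ht), ← sub_div]
  ring_nf

lemma IsWienerMeasure.covariance_coord_gridPt_incr (hW : IsWienerMeasure W) {i j : ℕ}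
    (hi : i ≤ n) (hj : j < n) :
    cov[coord (gridPt n i), incr n j; W] = if j < i then 1 / (n : ℝ) else 0 := by
  split_ifs with h
  · refine hW.covariance_coord_incr_of_ge hj ?_
    rw [coe_gridPt hi]
    gcongr
    exact_mod_cast h
  · refine hW.covariance_coord_incr_of_le hj ?_
    rw [coe_gridPt hi]
    gcongr
    omega

lemma IsWienerMeasure.covariance_incr_incr (hW : IsWienerMeasure W) {i j : ℕ}
    (hi : i < n) (hj : j < n) :
    cov[incr n i, incr n j; W] = if j = i then 1 / (n : ℝ) else 0 := by
  have := hW.isProbabilityMeasure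
  have hL := fun s => IsGaussianProcess.memLp_two hW (coord_mem_coordSpan s)
  have hL' := IsGaussianProcess.memLp_two hW (incr_mem_coordSpan n j)
  rw [show incr n i = coord (gridPt n (i + 1)) - coord (gridPt n i) from rfl,
    ProbabilityTheory.covariance_sub_left (hL _) (hL _) hL',
    hW.covariance_coord_gridPt_incr hi hj, hW.covariance_coord_gridPt_incr hi.le hj]
  rcases lt_trichotomy j i with h | h | h
  · simp [h, h.ne, h.trans (Nat.lt_succ_self i)]
  · simp [h]
  · simp [h.ne', show ¬ j < i + 1 by omega, show ¬ j < i by omega]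

lemma IsWienerMeasure.covariance_bridge_incr (hW : IsWienerMeasure W) (t : unitInterval) {j : ℕ}
    (hj : j < n) : cov[bridge n t, incr n j; W] = 0 := by
  have := hW.isProbabilityMeasure
  have hn : (0 : ℝ) < n := by exact_mod_cast (by omega : 0 < n)
  have hL := fun s => IsGaussianProcess.memLp_two hW (coord_mem_coordSpan s)
  have hL' := fun j => IsGaussianProcess.memLp_two hW (incr_mem_coordSpan n j)
  rw [bridge, interp, ProbabilityTheory.covariance_sub_left (hL _)
    ((hL _).add ((hL' _).const_smul _)) (hL' _), ProbabilityTheory.covariance_add_left (hL _)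
    ((hL' _).const_smul _) (hL' _), ProbabilityTheory.covariance_smul_left, gridFloor,
    hW.covariance_coord_gridPt_incr (floor_mul_le n t) hj]
  have h1 := mul_sub_floor_nonneg n t
  have h2 := Nat.lt_floor_add_one (n * (t : ℝ))
  have h0 : ⌊n * (t : ℝ)⌋₊ < n ∨ n * (t : ℝ) - ⌊n * (t : ℝ)⌋₊ = 0 :=
    (lt_or_ge _ _).imp_right mul_sub_floor_eq_zero
  have hkn := floor_mul_le n t
  generalize ⌊n * (t : ℝ)⌋₊ = k at *
  have hkt : (k : ℝ) / n ≤ t := by rw [div_le_iff₀ hn]; linarith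
  have htk : (t : ℝ) ≤ (k + 1) / n := by rw [le_div_iff₀ hn]; linarith
  rcases lt_trichotomy j k with h | h | h
  · have h3 : (n * (t : ℝ) - k) * cov[incr n k, incr n j; W] = 0 := by
      rcases h0 with h0 | h0
      · rw [hW.covariance_incr_incr h0 hj, if_neg h.ne, mul_zero]
      · rw [h0, zero_mul]
    have h4 : ((j : ℝ) + 1) / n ≤ k / n := by gcongr; exact_mod_cast h
    rw [h3, if_pos h, hW.covariance_coord_incr_of_ge hj (h4.trans hkt)]
    ring
  · subst h
    rw [hW.covariance_incr_incr hj hj, hW.covariance_coord_incr _ hj, min_eq_left htk,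
      min_eq_right hkt]
    simp only [lt_self_iff_false, if_true, if_false]
    field_simp
    ring
  · have h4 : ((k : ℝ) + 1) / n ≤ j / n := by gcongr; exact_mod_cast h
    rw [hW.covariance_incr_incr (h.trans hj) hj, if_neg h.ne', if_neg h.not_gt,
      hW.covariance_coord_incr_of_le hj (htk.trans h4)]
    ring

lemma IsWienerMeasure.iIndepFun_incr (hW : IsWienerMeasure W) :
    iIndepFun (fun (j : Fin n) => incr n j) W := by
  have h := ProbabilityTheory.IsGaussianProcess.iIndepFun_of_covariance_eq_zero
    (S := fun _ : Fin n => Unit) (X := fun j _ => incr n j) (P := W)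
    (IsGaussianProcess.isGaussianProcess_of_mem_coordSpan hW
      fun p => incr_mem_coordSpan n p.1)
    (fun j _ => (measurable_incr n j).aemeasurable)
    (fun i j hij _ _ => by
      rw [hW.covariance_incr_incr i.2 j.2, if_neg fun h => hij (Fin.ext h.symm)])
  exact h.comp (fun _ x => x ()) fun _ => measurable_pi_apply ()

lemma IsWienerMeasure.map_incr (hW : IsWienerMeasure W) {j : ℕ} (hj : j < n) :
    W.map (incr n j) = gaussianReal 0 (Real.toNNReal (1 / n)) := by
  rw [hW.isFBM.map_incr (by norm_num) hj]
  norm_num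

lemma IsWienerMeasure.measure_incr (hW : IsWienerMeasure W) (s : Finset (Fin n)) {A : ℕ → Set ℝ}
    (hA : ∀ j, MeasurableSet (A j)) :
    W (⋂ j ∈ s, incr n j ⁻¹' A j) = ∏ j ∈ s, gaussianReal 0 (Real.toNNReal (1 / n)) (A j) := by
  rw [hW.iIndepFun_incr.measure_inter_preimage_eq_mul s (sets := fun j => A j) fun j _ => hA j]
  refine Finset.prod_congr rfl fun j _ => ?_
  rw [← hW.map_incr j.2, Measure.map_apply (measurable_incr n j) (hA j)]

lemma IsWienerMeasure.measure_bridge_inter_incr (hW : IsWienerMeasure W) (t : ℕ → unitInterval)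
    {B A : ℕ → Set ℝ} (hB : ∀ i, MeasurableSet (B i)) (hA : ∀ j, MeasurableSet (A j)) :
    W ((⋂ i, bridge n (t i) ⁻¹' B i) ∩ ⋂ j : Fin n, incr n j ⁻¹' A j) =
      W (⋂ i, bridge n (t i) ⁻¹' B i) *
        ∏ j : Fin n, gaussianReal 0 (Real.toNNReal (1 / n)) (A j) := by
  have hmeas : ∀ t, Measurable (bridge n t) := fun t =>
    (continuous_of_mem_coordSpan (bridge_mem_coordSpan n t)).measurable
  have h := ProbabilityTheory.IsGaussianProcess.indepFun_of_covariance_eq_zero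
    (X := fun i => bridge n (t i)) (Y := fun j : Fin n => incr n j) (P := W)
    (IsGaussianProcess.isGaussianProcess_of_mem_coordSpan hW (by
      rintro (i | j)
      · exact bridge_mem_coordSpan n (t i)
      · exact incr_mem_coordSpan n j))
    (fun i => (hmeas _).aemeasurable) (fun j => (measurable_incr n j).aemeasurable)
    (fun i j => hW.covariance_bridge_incr (t i) j.2)
  have h2 := h.measure_inter_preimage_eq_mul (univ.pi B) (univ.pi fun j : Fin n => A j)
    (MeasurableSet.univ_pi hB) (MeasurableSet.univ_pi fun j => hA j)
  have e1 : (fun ω i => bridge n (t i) ω) ⁻¹' univ.pi B = ⋂ i, bridge n (t i) ⁻¹' B i := by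
    ext; simp
  have e2 : (fun ω (j : Fin n) => incr n j ω) ⁻¹' (univ.pi fun j : Fin n => A j) =
      ⋂ j : Fin n, incr n j ⁻¹' A j := by
    ext; simp
  rw [e1, e2] at h2
  rw [h2]
  congr 1
  simpa using hW.measure_incr Finset.univ hA

end Wiener

/-! ### Lower bound for the Wiener measure of balls -/

lemma natCast_add_one_le_mul_pow {q : ℝ} (hq : 1 < q) (m : ℕ) :
    (m : ℝ) + 1 ≤ (1 + 1 / (q - 1)) * q ^ m := by
  have h0 : 0 < q - 1 := by linarith
  have h1 := one_add_mul_le_pow (show (-2 : ℝ) ≤ q - 1 by linarith) m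
  rw [add_sub_cancel] at h1
  have h2 : 1 ≤ q ^ m := one_le_pow₀ hq.le
  have h3 : (m : ℝ) ≤ 1 / (q - 1) * q ^ m := by
    rw [one_div, inv_mul_eq_div, le_div_iff₀ h0]
    linarith
  linarith

lemma exp_le_gaussian_factor {r C x : ℝ} (hr : 1 / 2 < r ^ 2) (hr0 : 0 < r) (hr1 : r < 1) (m : ℕ)
    (hx0 : 0 ≤ x) (hx : x ≤ C * r ^ m) :
    Real.exp (-((2 * (1 + 1 / (2 * r ^ 2 - 1)) + (C + 1) ^ 2 / 2) * (2 * r ^ 2) ^ m)) ≤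
      r ^ m / 2 ^ m / (2 * √(1 / 2 ^ m)) *
        Real.exp (-(x + r ^ m / 2 ^ m) ^ 2 / (2 * (1 / 2 ^ m))) := by
  have h2m : (1 : ℝ) ≤ 2 ^ m := one_le_pow₀ (by norm_num)
  have hrm : 0 < r ^ m := by positivity
  have h1 : Real.exp (-(2 * ((m : ℝ) + 1))) ≤ r ^ m / 2 ^ m / (2 * √(1 / 2 ^ m)) := by
    have e1 : Real.exp (-(2 * ((m : ℝ) + 1))) = Real.exp (-2) ^ (m + 1) := by
      rw [← Real.exp_nat_mul]
      push_cast
      ring_nf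
    have hs : √(1 / 2 ^ m : ℝ) ≤ 1 :=
      Real.sqrt_le_one.2 (div_le_one_of_le₀ h2m (by positivity))
    have hs0 : 0 < √(1 / 2 ^ m : ℝ) := by positivity
    have hr2 : 1 / 2 ≤ r := by nlinarith
    calc Real.exp (-(2 * ((m : ℝ) + 1))) ≤ (1 / 4) ^ (m + 1) := by
          rw [e1]
          exact pow_le_pow_left₀ (Real.exp_pos _).le exp_neg_two_le _
      _ ≤ (1 / 2 / 2) ^ m / 2 := by
          rw [pow_succ]
          norm_num
          have : (0 : ℝ) < (1 / 4) ^ m := by positivity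
          linarith
      _ ≤ (r / 2) ^ m / 2 := by gcongr
      _ ≤ r ^ m / 2 ^ m / (2 * √(1 / 2 ^ m)) := by
          rw [div_pow]
          gcongr
          linarith
  have h2 : -((C + 1) ^ 2 / 2 * (2 * r ^ 2) ^ m) ≤
      -(x + r ^ m / 2 ^ m) ^ 2 / (2 * (1 / 2 ^ m)) := by
    have h3 : x + r ^ m / 2 ^ m ≤ (C + 1) * r ^ m := by
      have : r ^ m / 2 ^ m ≤ r ^ m := div_le_self hrm.le h2m
      linarith
    have h4 : (x + r ^ m / 2 ^ m) ^ 2 ≤ ((C + 1) * r ^ m) ^ 2 :=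
      pow_le_pow_left₀ (by positivity) h3 2
    rw [le_div_iff₀ (by positivity), mul_pow]
    have e : -((C + 1) ^ 2 / 2 * (2 ^ m * (r ^ 2) ^ m)) * (2 * (1 / 2 ^ m)) =
        -((C + 1) * r ^ m) ^ 2 := by
      field_simp
      ring
    rw [e]
    linarith
  have h5 := natCast_add_one_le_mul_pow (q := 2 * r ^ 2) (by linarith) m
  calc _ ≤ Real.exp (-(2 * ((m : ℝ) + 1)) + -((C + 1) ^ 2 / 2 * (2 * r ^ 2) ^ m)) := by
        apply Real.exp_le_exp.2
        linarith
    _ ≤ _ := by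
        rw [Real.exp_add]
        exact mul_le_mul h1 (Real.exp_le_exp.2 h2) (Real.exp_pos _).le (by positivity)

lemma IsWienerMeasure.ae_exists_dyadicHolder {W : Measure PathSpace} (hW : IsWienerMeasure W)
    {r : ℝ} (hr : 1 / 2 < r ^ 2) (hr0 : 0 < r) : ∀ᵐ ω ∂W, ∃ C, DyadicHolder r C ω := by
  refine hW.isFBM.ae_exists_dyadicHolder (by norm_num) ?_
  rw [← Real.sqrt_eq_rpow]
  exact (Real.sqrt_lt' hr0).2 hr

lemma IsWienerMeasure.exists_measure_dyadicHolder_ne_zero {W : Measure PathSpace}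
    (hW : IsWienerMeasure W) {r : ℝ} (hr : 1 / 2 < r ^ 2) (hr0 : 0 < r) :
    ∃ C, W {ω | DyadicHolder r C ω} ≠ 0 := by
  have := hW.isProbabilityMeasure
  by_contra! h
  have h1 : ∀ᵐ ω ∂W, ∀ N : ℕ, ¬ DyadicHolder r N ω :=
    ae_all_iff.2 fun N => measure_eq_zero_iff_ae_notMem.1 (h N)
  obtain ⟨ω, ⟨C, hC⟩, hω⟩ := ((hW.ae_exists_dyadicHolder hr hr0).and h1).exists
  obtain ⟨N, hN⟩ := exists_nat_ge C
  exact hω N (hC.mono hr0.le hN)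

/-- The Wiener measure of small balls around a dyadically Hölder path is not too small. -/
lemma IsWienerMeasure.exists_exp_le_measure_closedBall {W : Measure PathSpace}
    (hW : IsWienerMeasure W) {r C : ℝ} (hr : 1 / 2 < r ^ 2) (hr0 : 0 < r) (hr1 : r < 1)
    {ωb : PathSpace} (hωb : DyadicHolder r C ωb) :
    ∃ A > 0, ∃ B > 0, ∀ m : ℕ, Real.exp (-(B * (4 * r ^ 2) ^ m)) ≤
      (W (closedBall ωb (A * r ^ m))).toReal := by
  have := hW.isProbabilityMeasure
  obtain ⟨C₀, hC₀⟩ := hW.exists_measure_dyadicHolder_ne_zero hr hr0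
  set c : ℝ := (W {ω | DyadicHolder r C₀ ω}).toReal with hc
  have hc0 : 0 < c := ENNReal.toReal_pos hC₀ (measure_ne_top _ _)
  have hC₀' : 0 ≤ C₀ := by
    obtain ⟨ω, hω⟩ := nonempty_of_measure_ne_zero hC₀
    exact DyadicHolder.nonneg hω
  have hC := hωb.nonneg
  have h1r : 0 < 1 - r := by linarith
  set D : ℝ := 2 * C₀ / (1 - r)
  set D' : ℝ := 2 * C / (1 - r)
  have hD : 0 ≤ D := by positivity
  have hD' : 0 ≤ D' := by positivity
  set B₁ : ℝ := 2 * (1 + 1 / (2 * r ^ 2 - 1)) + (C + 1) ^ 2 / 2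
  have hB₁ : 0 < B₁ := by
    have : 0 < 2 * r ^ 2 - 1 := by linarith
    positivity
  refine ⟨D + D' + 1, by positivity, B₁ + |Real.log c|, by positivity, fun m => ?_⟩
  set t := TopologicalSpace.denseSeq unitInterval
  set s : ℝ := r ^ m / 2 ^ m with hs
  set E : Set PathSpace := ⋂ i, bridge (2 ^ m) (t i) ⁻¹' Icc (-(D * r ^ m)) (D * r ^ m)
  set A : ℕ → Set ℝ := fun j => Icc (incr (2 ^ m) j ωb - s) (incr (2 ^ m) j ωb + s)
  have hE : {ω | DyadicHolder r C₀ ω} ⊆ E := fun ω hω => mem_iInter.2 fun i =>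
    abs_le.1 (DyadicHolder.abs_bridge_le hr0 hr1 hω m (t i))
  have hsub : E ∩ ⋂ j : Fin (2 ^ m), incr (2 ^ m) j ⁻¹' A j ⊆
      closedBall ωb ((D + D' + 1) * r ^ m) := by
    rintro ω ⟨h1, h2⟩
    rw [mem_iInter] at h1 h2
    have := dist_le_of_bridge_of_incr (n := 2 ^ m) (s := s) (D := D * r ^ m) (D' := D' * r ^ m)
      (ω := ω) (ω' := ωb) (fun i => abs_le.2 (h1 i)) (fun t => hωb.abs_bridge_le hr0 hr1 m t)
      (fun j hj => by
        have h3 : incr (2 ^ m) j ω ∈ A j := h2 ⟨j, hj⟩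
        rw [abs_le]
        constructor <;> linarith [h3.1, h3.2])
    refine mem_closedBall.2 (this.trans_eq ?_)
    rw [hs]
    push_cast
    field_simp
  have hfac : ∀ j : Fin (2 ^ m), ENNReal.ofReal (Real.exp (-(B₁ * (2 * r ^ 2) ^ m))) ≤
      gaussianReal 0 (Real.toNNReal (1 / (2 ^ m : ℕ))) (A j) := fun j => by
    have hv : (0 : ℝ) < 1 / (2 ^ m : ℕ) := by positivity
    refine le_trans (ENNReal.ofReal_le_ofReal ?_)
      (le_gaussianReal_Icc (Real.toNNReal_pos.2 hv).ne' _ _)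
    rw [Real.coe_toNNReal _ hv.le]
    push_cast
    exact exp_le_gaussian_factor hr hr0 hr1 m (abs_nonneg _) (hωb m j j.2)
  have hmain := measure_mono (μ := W) hsub
  have hsplit := hW.measure_bridge_inter_incr (n := 2 ^ m) t
    (B := fun _ => Icc (-(D * r ^ m)) (D * r ^ m)) (A := A) (fun _ => measurableSet_Icc)
    (fun _ => measurableSet_Icc)
  have hprod : ENNReal.ofReal (Real.exp (-(B₁ * (4 * r ^ 2) ^ m))) ≤
      ∏ j : Fin (2 ^ m), gaussianReal 0 (Real.toNNReal (1 / (2 ^ m : ℕ))) (A j) := by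
    refine le_trans (le_of_eq ?_) (Finset.prod_le_prod' fun j _ => hfac j)
    rw [Finset.prod_const, Finset.card_univ, Fintype.card_fin,
      ← ENNReal.ofReal_pow (Real.exp_pos _).le, ← Real.exp_nat_mul]
    congr 2
    rw [show 4 * r ^ 2 = 2 * (2 * r ^ 2) by ring, mul_pow 2]
    push_cast
    ring
  have hlast : ENNReal.ofReal (c * Real.exp (-(B₁ * (4 * r ^ 2) ^ m))) ≤
      W (closedBall ωb ((D + D' + 1) * r ^ m)) := by
    rw [ENNReal.ofReal_mul hc0.le, hc, ENNReal.ofReal_toReal (measure_ne_top _ _)]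
    exact ((mul_le_mul' (measure_mono hE) hprod).trans_eq hsplit.symm).trans hmain
  refine le_trans ?_ ((ENNReal.ofReal_le_iff_le_toReal (measure_ne_top _ _)).1 hlast)
  have h1 : Real.exp (-(|Real.log c| * (4 * r ^ 2) ^ m)) ≤ c := by
    have h2 : (1 : ℝ) ≤ (4 * r ^ 2) ^ m := one_le_pow₀ (by linarith)
    have h3 : |Real.log c| ≤ |Real.log c| * (4 * r ^ 2) ^ m :=
      le_mul_of_one_le_right (abs_nonneg _) h2
    calc _ ≤ Real.exp (Real.log c) :=
          Real.exp_le_exp.2 (by linarith [neg_abs_le (Real.log c)])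
      _ = c := Real.exp_log hc0
  rw [add_mul, neg_add, Real.exp_add, mul_comm]
  gcongr

/-! ### Upper bounds for the Wiener measure of balls -/

lemma ball_subset_incr {n : ℕ} (ωb : PathSpace) (ε : ℝ) (s : Finset (Fin n)) :
    ball ωb ε ⊆ ⋂ j ∈ s, incr n j ⁻¹' Icc (incr n j ωb - 2 * ε) (incr n j ωb + 2 * ε) := by
  intro ω hω
  refine mem_iInter₂.2 fun j _ => ?_
  have h : ∀ t, |ω.1 t - ωb.1 t| ≤ ε := fun t =>
    (ContinuousMap.dist_apply_le_dist (f := ω.1) (g := ωb.1) t).trans (mem_ball.1 hω).le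
  have h1 := abs_le.1 (h (gridPt n (j + 1)))
  have h2 := abs_le.1 (h (gridPt n j))
  simp only [mem_preimage, mem_Icc, incr, coord, Pi.sub_apply]
  constructor <;> linarith [h1.1, h1.2, h2.1, h2.2]

lemma IsWienerMeasure.measure_ball_le_prod {W : Measure PathSpace} (hW : IsWienerMeasure W)
    {n : ℕ} (ωb : PathSpace) (ε : ℝ) (s : Finset (Fin n)) :
    W (ball ωb ε) ≤ ∏ j ∈ s, gaussianReal 0 (Real.toNNReal (1 / n))
      (Icc (incr n j ωb - 2 * ε) (incr n j ωb + 2 * ε)) := by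
  refine (measure_mono (ball_subset_incr ωb ε s)).trans_eq ?_
  exact hW.measure_incr s (A := fun j => Icc (incr n j ωb - 2 * ε) (incr n j ωb + 2 * ε))
    fun _ => measurableSet_Icc

/-- Small balls of the Wiener measure around an arbitrary path. -/
lemma IsWienerMeasure.measure_ball_le {W : Measure PathSpace} (hW : IsWienerMeasure W)
    {r : ℝ} (hr0 : 0 < r) (hr : r ^ 2 = 1 / 2) (ωb : PathSpace) (m : ℕ) :
    (W (ball ωb (1 / 4 * r ^ m))).toReal ≤ Real.exp (-(1 / 2 * (4 * r ^ 2) ^ m)) := by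
  have hv : (0 : ℝ) < 1 / (2 ^ m : ℕ) := by positivity
  refine ENNReal.toReal_le_of_le_ofReal (Real.exp_pos _).le ?_
  refine (hW.measure_ball_le_prod (n := 2 ^ m) ωb _ Finset.univ).trans ?_
  have hfac : ∀ j : Fin (2 ^ m), gaussianReal 0 (Real.toNNReal (1 / (2 ^ m : ℕ)))
      (Icc (incr (2 ^ m) j ωb - 2 * (1 / 4 * r ^ m)) (incr (2 ^ m) j ωb + 2 * (1 / 4 * r ^ m))) ≤
      ENNReal.ofReal (Real.exp (-(1 / 2))) := fun j => by
    refine (gaussianReal_Icc_le (Real.toNNReal_pos.2 hv).ne' _ _).trans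
      (ENNReal.ofReal_le_ofReal ?_)
    have hsqrt : √(1 / (2 ^ m : ℕ) : ℝ) = r ^ m := by
      rw [Real.sqrt_eq_iff_eq_sq hv.le (by positivity), ← pow_mul, mul_comm, pow_mul, hr]
      push_cast
      rw [one_div_pow]
    rw [Real.coe_toNNReal _ hv.le, hsqrt]
    have hrm : 0 < r ^ m := by positivity
    have h1 := Real.add_one_le_exp (-(1 / 2) : ℝ)
    refine le_trans (le_of_eq ?_) (le_trans (by norm_num : (1 / 2 : ℝ) ≤ -(1 / 2) + 1) h1)
    field_simp
    ring
  refine (Finset.prod_le_prod' fun j _ => hfac j).trans_eq ?_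
  rw [Finset.prod_const, Finset.card_univ, Fintype.card_fin,
    ← ENNReal.ofReal_pow (Real.exp_pos _).le, ← Real.exp_nat_mul, hr]
  congr 2
  push_cast
  norm_num
  ring

/-- Small balls of the Wiener measure around a path with many large increments. -/
lemma IsWienerMeasure.measure_ball_le_of_incr {W : Measure PathSpace} (hW : IsWienerMeasure W)
    {r : ℝ} (hr0 : 0 < r) {ωb : PathSpace} {m : ℕ} {G : Finset (Fin (2 ^ m))}
    (hG : ∀ j ∈ G, r ^ m ≤ |incr (2 ^ m) j ωb|) (hcard : 2 ^ m ≤ 2 * G.card) :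
    (W (ball ωb (1 / 4 * r ^ m))).toReal ≤ Real.exp (-(1 / 16 * (4 * r ^ 2) ^ m)) := by
  have hv : (0 : ℝ) < 1 / (2 ^ m : ℕ) := by positivity
  have hrm : 0 < r ^ m := by positivity
  refine ENNReal.toReal_le_of_le_ofReal (Real.exp_pos _).le ?_
  refine (hW.measure_ball_le_prod (n := 2 ^ m) ωb _ G).trans ?_
  have hfac : ∀ j ∈ G, gaussianReal 0 (Real.toNNReal (1 / (2 ^ m : ℕ)))
      (Icc (incr (2 ^ m) j ωb - 2 * (1 / 4 * r ^ m)) (incr (2 ^ m) j ωb + 2 * (1 / 4 * r ^ m))) ≤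
      ENNReal.ofReal (Real.exp (-((2 * r ^ 2) ^ m / 8))) := fun j hj => by
    have hexp : Real.exp (-(r ^ m / 2) ^ 2 / (2 * (Real.toNNReal (1 / (2 ^ m : ℕ)) : ℝ))) =
        Real.exp (-((2 * r ^ 2) ^ m / 8)) := by
      rw [Real.coe_toNNReal _ hv.le]
      congr 1
      push_cast
      rw [mul_pow]
      field_simp
      ring
    rw [← hexp]
    rcases le_abs.1 (hG j hj) with h | h
    · refine (measure_mono fun x hx => ?_).trans
        (gaussianReal_Ici_le (Real.toNNReal_pos.2 hv).ne' (by positivity))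
      exact mem_Ici.2 (by linarith [hx.1])
    · refine (measure_mono fun x hx => ?_).trans
        (gaussianReal_Iic_le (Real.toNNReal_pos.2 hv).ne' (by positivity))
      exact mem_Iic.2 (by linarith [hx.2])
  refine (Finset.prod_le_prod' hfac).trans ?_
  rw [Finset.prod_const, ← ENNReal.ofReal_pow (Real.exp_pos _).le, ← Real.exp_nat_mul]
  refine ENNReal.ofReal_le_ofReal (Real.exp_le_exp.2 ?_)
  have h1 : (2 : ℝ) ^ m ≤ 2 * G.card := by exact_mod_cast hcard
  have h2 : 0 < (2 * r ^ 2) ^ m := by positivity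
  have h3 : (4 * r ^ 2) ^ m = 2 ^ m * (2 * r ^ 2) ^ m := by rw [← mul_pow]; ring_nf
  rw [h3]
  nlinarith

open scoped Classical in
/-- The cells of the dyadic grid of level `m` over which the increment is at least `r ^ m`. -/
def largeIncr (r : ℝ) (m : ℕ) (ω : PathSpace) : Finset (Fin (2 ^ m)) :=
  Finset.univ.filter fun j => r ^ m ≤ |incr (2 ^ m) j ω|

lemma IsFBM.measure_abs_incr_lt_le {H : ℝ} (hH : 0 < H) {μ : Measure PathSpace} (hμ : IsFBM H μ)
    (r : ℝ) {m j : ℕ} (hj : j < 2 ^ m) :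
    μ {ω | |incr (2 ^ m) j ω| < r ^ m} ≤ ENNReal.ofReal ((r / (1 / 2 : ℝ) ^ H) ^ m) := by
  set s : ℝ := (1 / 2 : ℝ) ^ H with hs
  have hs0 : 0 < s := by positivity
  have hv : (0 : ℝ) < (s ^ m) ^ 2 := by positivity
  have hsub : {ω | |incr (2 ^ m) j ω| < r ^ m} ⊆ incr (2 ^ m) j ⁻¹' Icc (-r ^ m) (r ^ m) :=
    fun ω hω => abs_le.1 (show |incr (2 ^ m) j ω| < r ^ m from hω).le
  refine (measure_mono hsub).trans ?_
  rw [← Measure.map_apply (measurable_incr _ _) measurableSet_Icc, hμ.map_incr_two_pow hH hj]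
  refine (gaussianReal_Icc_le (Real.toNNReal_pos.2 hv).ne' _ _).trans_eq ?_
  rw [Real.coe_toNNReal _ hv.le, Real.sqrt_sq (by positivity), div_pow]
  congr 1
  ring

lemma IsFBM.measure_card_largeIncr_lt_le {H : ℝ} (hH : 0 < H) {μ : Measure PathSpace}
    (hμ : IsFBM H μ) (r : ℝ) (m : ℕ) :
    μ {ω | 2 * (largeIncr r m ω).card < 2 ^ m} ≤
      ENNReal.ofReal (2 * (r / (1 / 2 : ℝ) ^ H) ^ m) := by
  classical
  set S : Fin (2 ^ m) → Set PathSpace := fun j => {ω | |incr (2 ^ m) j ω| < r ^ m}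
  have hS : ∀ j, MeasurableSet (S j) := fun j =>
    (isOpen_lt (continuous_incr _ _).abs continuous_const).measurableSet
  set f : PathSpace → ℝ≥0∞ := fun ω => ∑ j, (S j).indicator 1 ω
  have hf : ∫⁻ ω, f ω ∂μ ≤ 2 ^ m * ENNReal.ofReal ((r / (1 / 2 : ℝ) ^ H) ^ m) := by
    rw [lintegral_finsetSum _ fun j _ => measurable_one.indicator (hS j)]
    simp_rw [lintegral_indicator_one (hS _)]
    refine (Finset.sum_le_card_nsmul _ _ _
      fun j _ => hμ.measure_abs_incr_lt_le hH r j.2).trans_eq ?_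
    simp
  have hcount : ∀ ω, f ω = ((2 ^ m - (largeIncr r m ω).card : ℕ) : ℝ≥0∞) := fun ω => by
    have h1 : f ω = ∑ j : Fin (2 ^ m), if ¬ r ^ m ≤ |incr (2 ^ m) j ω| then 1 else 0 := by
      refine Finset.sum_congr rfl fun j _ => ?_
      simp [S, indicator_apply, not_le]
    have h2 := Finset.card_filter_add_card_filter_not
      (s := (Finset.univ : Finset (Fin (2 ^ m)))) (fun j => r ^ m ≤ |incr (2 ^ m) j ω|)
    rw [Finset.card_univ, Fintype.card_fin] at h2
    rw [h1, Finset.sum_boole]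
    congr 1
    rw [largeIncr]
    convert (Nat.eq_sub_of_add_eq' h2)
  have hsub : {ω | 2 * (largeIncr r m ω).card < 2 ^ m} ⊆ {ω | (2 : ℝ≥0∞) ^ m ≤ 2 * f ω} := by
    intro ω hω
    have h : 2 * (largeIncr r m ω).card < 2 ^ m := hω
    show (2 : ℝ≥0∞) ^ m ≤ 2 * f ω
    rw [hcount]
    exact_mod_cast (by omega : 2 ^ m ≤ 2 * (2 ^ m - (largeIncr r m ω).card))
  have hmk := mul_meas_ge_le_lintegral₀ (μ := μ) (f := fun ω => 2 * f ω)
    (((Finset.measurable_sum _ fun j _ => measurable_one.indicator (hS j)).const_mul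
      2).aemeasurable) (2 ^ m)
  rw [lintegral_const_mul _ (Finset.measurable_sum _ fun j _ =>
    measurable_one.indicator (hS j))] at hmk
  have h2m : (2 : ℝ≥0∞) ^ m ≠ 0 := by positivity
  have h2m' : (2 : ℝ≥0∞) ^ m ≠ ∞ := ENNReal.pow_ne_top (by norm_num)
  refine (measure_mono hsub).trans ?_
  rw [ENNReal.ofReal_mul (by norm_num), ← ENNReal.mul_le_mul_iff_right h2m h2m']
  refine hmk.trans ((mul_le_mul_right hf 2).trans_eq ?_)
  rw [ENNReal.ofReal_ofNat]
  ring

lemma IsFBM.ae_eventually_card_largeIncr {H : ℝ} (hH : 0 < H) {μ : Measure PathSpace}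
    (hμ : IsFBM H μ) {r : ℝ} (hr0 : 0 < r) (hr : r < (1 / 2 : ℝ) ^ H) :
    ∀ᵐ ω ∂μ, ∀ᶠ m in atTop, 2 ^ m ≤ 2 * (largeIncr r m ω).card := by
  have hs : (0 : ℝ) < (1 / 2 : ℝ) ^ H := by positivity
  have h := ae_eventually_notMem_of_le (μ := μ)
    (s := fun m => {ω | 2 * (largeIncr r m ω).card < 2 ^ m})
    ((summable_geometric_of_lt_one (by positivity) ((div_lt_one hs).2 hr)).mul_left 2)
    (Eventually.of_forall fun m => hμ.measure_card_largeIncr_lt_le hH r m)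
  filter_upwards [h] with ω hω
  filter_upwards [hω] with m hm
  exact not_lt.1 hm

lemma IsWienerMeasure.ae_eventually_measure_ball_le {W : Measure PathSpace}
    (hW : IsWienerMeasure W) {H : ℝ} (hH : 0 < H) {μ : Measure PathSpace} (hμ : IsFBM H μ)
    {r : ℝ} (hr0 : 0 < r) (hr : r < (1 / 2 : ℝ) ^ H) :
    ∀ᵐ ωb ∂μ, ∀ᶠ m : ℕ in atTop,
      (W (ball ωb (1 / 4 * r ^ m))).toReal ≤ Real.exp (-(1 / 16 * (4 * r ^ 2) ^ m)) := by
  filter_upwards [hμ.ae_eventually_card_largeIncr hH hr0 hr] with ωb h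
  filter_upwards [h] with m hm
  exact hW.measure_ball_le_of_incr hr0 (fun j hj => (Finset.mem_filter.1 hj).2) hm

/-! ### From geometric scales to local orders -/

lemma tendsto_div_neg_log_add (K L : ℝ) :
    Tendsto (fun ε : ℝ => ((K / -Real.log ε + L : ℝ) : EReal)) (𝓝[>] 0) (𝓝 (L : EReal)) := by
  refine (continuous_coe_real_ereal.tendsto _).comp ?_
  have h := (tendsto_neg_atBot_atTop.comp Real.tendsto_log_nhdsGT_zero).const_div_atTop K
  simpa using! h.add_const L

lemma tendsto_scale_atTop {r : ℝ} (hr0 : 0 < r) (hr1 : r < 1) (A : ℝ) :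
    Tendsto (fun ε : ℝ => (Real.log A - Real.log ε) / -Real.log r) (𝓝[>] 0) atTop := by
  have hd : 0 < -Real.log r := neg_pos.2 (Real.log_neg hr0 hr1)
  refine Tendsto.atTop_div_const hd ?_
  simp_rw [sub_eq_add_neg]
  exact tendsto_atTop_add_const_left _ _
    (tendsto_neg_atBot_atTop.comp Real.tendsto_log_nhdsGT_zero)

lemma log_mul_pow {r A : ℝ} (hr0 : 0 < r) (hA : 0 < A) (m : ℕ) :
    Real.log (A * r ^ m) = Real.log A + m * Real.log r := by
  rw [Real.log_mul hA.ne' (by positivity), Real.log_pow]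

lemma upperLocOrd_le_of_forall {W : Measure PathSpace} [IsProbabilityMeasure W] {ω : PathSpace}
    {r A B Q : ℝ} (hr0 : 0 < r) (hr1 : r < 1) (hA : 0 < A) (hQ : 1 < Q)
    (h : ∀ m : ℕ, Real.exp (-(B * Q ^ m)) ≤ (W (closedBall ω (A * r ^ m))).toReal) :
    upperLocOrd W ω ≤ ((Real.log Q / -Real.log r : ℝ) : EReal) := by
  set d : ℝ := -Real.log r with hd
  have hd0 : 0 < d := neg_pos.2 (Real.log_neg hr0 hr1)
  have hlQ : 0 < Real.log Q := Real.log_pos hQ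
  set B' : ℝ := max B 1
  have hB' : 1 ≤ B' := le_max_right _ _
  have key : ∀ᶠ ε : ℝ in 𝓝[>] 0,
      ((Real.log (-Real.log ((W (ball ω ε)).toReal)) / (-Real.log ε) : ℝ) : EReal) ≤
      (((Real.log B' + Real.log Q + Real.log A * Real.log Q / d) / -Real.log ε +
        Real.log Q / d : ℝ) : EReal) := by
    filter_upwards [Ioo_mem_nhdsGT (zero_lt_one' ℝ),
      (tendsto_scale_atTop hr0 hr1 A).eventually_ge_atTop 0] with ε hε hx
    rw [← hd] at hx
    have hε0 : 0 < ε := hε.1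
    have hle : 0 < -Real.log ε := neg_pos.2 (Real.log_neg hε.1 hε.2)
    set x : ℝ := (Real.log A - Real.log ε) / d with hxdef
    set m : ℕ := ⌊x⌋₊ + 1 with hm
    have hm1 : x < m := by rw [hm]; push_cast; exact Nat.lt_floor_add_one x
    have hm2 : (m : ℝ) ≤ x + 1 := by rw [hm]; push_cast; linarith [Nat.floor_le hx]
    have hball : A * r ^ m < ε := by
      rw [← Real.log_lt_log_iff (by positivity) hε0, log_mul_pow hr0 hA]
      rw [hxdef, div_lt_iff₀ hd0, hd] at hm1
      linarith
    have hW := (h m).trans (ENNReal.toReal_mono (measure_ne_top W _)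
      (measure_mono (closedBall_subset_ball hball)))
    set w := (W (ball ω ε)).toReal
    have hQm : 1 ≤ Q ^ m := one_le_pow₀ hQ.le
    have hy1 : -Real.log w ≤ B' * Q ^ m := by
      have h1 := (Real.le_log_iff_exp_le ((Real.exp_pos _).trans_le hW)).2 hW
      have h2 : B * Q ^ m ≤ B' * Q ^ m := by gcongr; exact le_max_left _ _
      linarith
    have hy0 : 0 ≤ -Real.log w :=
      neg_nonneg.2 (Real.log_nonpos ENNReal.toReal_nonneg measureReal_le_one)
    have hlog : Real.log (-Real.log w) ≤ Real.log B' + (x + 1) * Real.log Q := by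
      have h1 : Real.log (-Real.log w) ≤ Real.log (B' * Q ^ m) := by
        rcases hy0.eq_or_lt with h0 | h0
        · rw [← h0, Real.log_zero]
          exact Real.log_nonneg (one_le_mul_of_one_le_of_one_le hB' hQm)
        · exact Real.log_le_log h0 hy1
      rw [log_mul_pow (by positivity) (by positivity)] at h1
      have := mul_le_mul_of_nonneg_right hm2 hlQ.le
      linarith
    refine EReal.coe_le_coe_iff.2 ?_
    rw [div_le_iff₀ hle, add_mul, div_mul_cancel₀ _ hle.ne']
    refine hlog.trans_eq ?_
    rw [hxdef]
    field_simp
    ring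
  refine (limsup_le_limsup key).trans_eq ?_
  exact (tendsto_div_neg_log_add _ _).limsup_eq

lemma le_lowerLocOrd_of_eventually {W : Measure PathSpace} [IsProbabilityMeasure W]
    {ω : PathSpace} {r A B Q : ℝ} (hr0 : 0 < r) (hr1 : r < 1) (hA : 0 < A) (hB : 0 < B)
    (hQ : 1 < Q) (hpos : ∀ ε > 0, 0 < (W (ball ω ε)).toReal)
    (h : ∀ᶠ m : ℕ in atTop, (W (ball ω (A * r ^ m))).toReal ≤ Real.exp (-(B * Q ^ m))) :
    ((Real.log Q / -Real.log r : ℝ) : EReal) ≤ lowerLocOrd W ω := by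
  set d : ℝ := -Real.log r with hd
  have hd0 : 0 < d := neg_pos.2 (Real.log_neg hr0 hr1)
  have hlQ : 0 < Real.log Q := Real.log_pos hQ
  have hscale := tendsto_scale_atTop hr0 hr1 A
  have key : ∀ᶠ ε : ℝ in 𝓝[>] 0,
      (((Real.log B - Real.log Q + Real.log A * Real.log Q / d) / -Real.log ε +
        Real.log Q / d : ℝ) : EReal) ≤
      ((Real.log (-Real.log ((W (ball ω ε)).toReal)) / (-Real.log ε) : ℝ) : EReal) := by
    filter_upwards [Ioo_mem_nhdsGT (zero_lt_one' ℝ), hscale.eventually_ge_atTop 0,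
      (tendsto_nat_floor_atTop.comp hscale).eventually h] with ε hε hx hm
    simp only [Function.comp_apply, ← hd] at hm hx
    have hε0 : 0 < ε := hε.1
    have hle : 0 < -Real.log ε := neg_pos.2 (Real.log_neg hε.1 hε.2)
    set x : ℝ := (Real.log A - Real.log ε) / d with hxdef
    have hm1 : (⌊x⌋₊ : ℝ) ≤ x := Nat.floor_le hx
    have hm2 : x ≤ ⌊x⌋₊ + 1 := (Nat.lt_floor_add_one x).le
    generalize ⌊x⌋₊ = m at *
    have hball : ε ≤ A * r ^ m := by
      rw [← Real.log_le_log_iff hε0 (by positivity), log_mul_pow hr0 hA]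
      rw [hxdef, le_div_iff₀ hd0, hd] at hm1
      linarith
    have hW := (ENNReal.toReal_mono (measure_ne_top W _)
      (measure_mono (ball_subset_ball hball))).trans hm
    have hw0 := hpos ε hε0
    set w := (W (ball ω ε)).toReal
    have hQm : 1 ≤ Q ^ m := one_le_pow₀ hQ.le
    have hy1 : B * Q ^ m ≤ -Real.log w := by
      have h1 := (Real.log_le_iff_le_exp hw0).2 hW
      linarith
    have hlog : Real.log B + (x - 1) * Real.log Q ≤ Real.log (-Real.log w) := by
      have h1 := Real.log_le_log (by positivity) hy1
      rw [log_mul_pow (by positivity) (by positivity)] at h1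
      have := mul_le_mul_of_nonneg_right hm2 hlQ.le
      linarith
    refine EReal.coe_le_coe_iff.2 ?_
    rw [le_div_iff₀ hle, add_mul, div_mul_cancel₀ _ hle.ne']
    refine le_of_eq_of_le ?_ hlog
    rw [hxdef]
    field_simp
    ring
  refine le_of_eq_of_le ?_ (liminf_le_liminf key)
  exact (tendsto_div_neg_log_add _ _).liminf_eq.symm

lemma lowerLocOrd_le_upperLocOrd (W : Measure PathSpace) (ω : PathSpace) :
    lowerLocOrd W ω ≤ upperLocOrd W ω := liminf_le_limsup

lemma IsWienerMeasure.measure_ball_pos {W : Measure PathSpace}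
    (hW : IsWienerMeasure W) {r C : ℝ} (hr : 1 / 2 < r ^ 2) (hr0 : 0 < r) (hr1 : r < 1)
    {ωb : PathSpace} (hωb : DyadicHolder r C ωb) (ε : ℝ) (hε : 0 < ε) :
    0 < (W (ball ωb ε)).toReal := by
  have := hW.isProbabilityMeasure
  obtain ⟨A, hA, B, -, h⟩ := hW.exists_exp_le_measure_closedBall hr hr0 hr1 hωb
  have ht := (tendsto_pow_atTop_nhds_zero_of_lt_one hr0.le hr1).const_mul A
  rw [mul_zero] at ht
  obtain ⟨m, hm⟩ := (ht.eventually (gt_mem_nhds hε)).exists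
  exact ((Real.exp_pos _).trans_le (h m)).trans_le (ENNReal.toReal_mono (measure_ne_top W _)
    (measure_mono (closedBall_subset_ball hm)))

/-! ### Local orders at paths of fractional Brownian motion -/

lemma log_div_neg_log_half_rpow {a : ℝ} (ha : 0 < a) :
    Real.log (4 * ((1 / 2 : ℝ) ^ a) ^ 2) / -Real.log ((1 / 2 : ℝ) ^ a) = 2 / a - 2 := by
  have h2 : 0 < Real.log 2 := Real.log_pos (by norm_num)
  rw [Real.log_mul (by norm_num) (by positivity), Real.log_pow, Real.log_rpow (by norm_num),
    show (4 : ℝ) = 2 ^ 2 by norm_num, Real.log_pow, one_div, Real.log_inv]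
  push_cast
  field_simp
  ring

lemma half_rpow_sq (a : ℝ) : ((1 / 2 : ℝ) ^ a) ^ 2 = (1 / 2 : ℝ) ^ (2 * a) := by
  rw [← Real.rpow_natCast, ← Real.rpow_mul (by norm_num), mul_comm]
  norm_num

lemma half_lt_half_rpow_sq {a : ℝ} (ha : a < 1 / 2) : 1 / 2 < ((1 / 2 : ℝ) ^ a) ^ 2 := by
  rw [half_rpow_sq]
  nth_rewrite 1 [← Real.rpow_one (1 / 2 : ℝ)]
  exact Real.rpow_lt_rpow_of_exponent_gt (by norm_num) (by norm_num) (by linarith)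

lemma one_lt_four_mul_half_rpow_sq {a : ℝ} (ha : a < 1) : 1 < 4 * ((1 / 2 : ℝ) ^ a) ^ 2 := by
  have h : (1 / 2 : ℝ) ^ (2 : ℝ) < (1 / 2 : ℝ) ^ (2 * a) :=
    Real.rpow_lt_rpow_of_exponent_gt (by norm_num) (by norm_num) (by linarith)
  rw [half_rpow_sq]
  norm_num at h ⊢
  linarith

lemma half_rpow_lt_one {a : ℝ} (ha : 0 < a) : (1 / 2 : ℝ) ^ a < 1 :=
  Real.rpow_lt_one (by norm_num) (by norm_num) ha

section LocalOrder

variable {W μ : Measure PathSpace} {H : ℝ}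

lemma IsWienerMeasure.ae_upperLocOrd_le (hW : IsWienerMeasure W) (hμ : IsFBM H μ) {a : ℝ}
    (ha0 : 0 < a) (haH : a < H) (ha : a < 1 / 2) :
    ∀ᵐ ω ∂μ, upperLocOrd W ω ≤ ((2 / a - 2 : ℝ) : EReal) := by
  have := hW.isProbabilityMeasure
  have hr0 : (0 : ℝ) < (1 / 2 : ℝ) ^ a := by positivity
  filter_upwards [hμ.ae_exists_dyadicHolder (ha0.trans haH)
    (Real.rpow_lt_rpow_of_exponent_gt (by norm_num) (by norm_num) haH)] with ω ⟨C, hC⟩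
  obtain ⟨A, hA, B, -, h⟩ := hW.exists_exp_le_measure_closedBall (half_lt_half_rpow_sq ha) hr0
    (half_rpow_lt_one ha0) hC
  rw [← log_div_neg_log_half_rpow ha0]
  exact upperLocOrd_le_of_forall hr0 (half_rpow_lt_one ha0) hA
    (one_lt_four_mul_half_rpow_sq (by linarith)) h

lemma IsWienerMeasure.ae_measure_ball_pos (hW : IsWienerMeasure W) (hH : 0 < H)
    (hμ : IsFBM H μ) : ∀ᵐ ω ∂μ, ∀ ε > 0, 0 < (W (ball ω ε)).toReal := by
  obtain ⟨a, ha0, ha⟩ := exists_between (lt_min hH (by norm_num : (0 : ℝ) < 1 / 2))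
  filter_upwards [hμ.ae_exists_dyadicHolder hH (Real.rpow_lt_rpow_of_exponent_gt (by norm_num)
    (by norm_num) (ha.trans_le (min_le_left _ _)))] with ω ⟨C, hC⟩
  exact hW.measure_ball_pos (half_lt_half_rpow_sq (ha.trans_le (min_le_right _ _)))
    (by positivity) (half_rpow_lt_one ha0) hC

lemma IsWienerMeasure.ae_le_lowerLocOrd (hW : IsWienerMeasure W) (hH : 0 < H) (hμ : IsFBM H μ)
    {a : ℝ} (haH : H < a) (ha : a < 1) :
    ∀ᵐ ω ∂μ, ((2 / a - 2 : ℝ) : EReal) ≤ lowerLocOrd W ω := by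
  have := hW.isProbabilityMeasure
  have ha0 := hH.trans haH
  have hr0 : (0 : ℝ) < (1 / 2 : ℝ) ^ a := by positivity
  filter_upwards [hW.ae_measure_ball_pos hH hμ, hW.ae_eventually_measure_ball_le hH hμ hr0
    (Real.rpow_lt_rpow_of_exponent_gt (by norm_num) (by norm_num) haH)] with ω hpos h
  rw [← log_div_neg_log_half_rpow ha0]
  exact le_lowerLocOrd_of_eventually hr0 (half_rpow_lt_one ha0) (by norm_num) (by norm_num)
    (one_lt_four_mul_half_rpow_sq ha) hpos h

lemma IsWienerMeasure.ae_two_le_lowerLocOrd (hW : IsWienerMeasure W) (hH : 0 < H)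
    (hμ : IsFBM H μ) : ∀ᵐ ω ∂μ, ((2 : ℝ) : EReal) ≤ lowerLocOrd W ω := by
  have := hW.isProbabilityMeasure
  have hr0 : (0 : ℝ) < (1 / 2 : ℝ) ^ (1 / 2 : ℝ) := by positivity
  filter_upwards [hW.ae_measure_ball_pos hH hμ] with ω hpos
  have h := log_div_neg_log_half_rpow (a := 1 / 2) (by norm_num)
  rw [show (2 : ℝ) = 2 / (1 / 2) - 2 by norm_num, ← h]
  refine le_lowerLocOrd_of_eventually hr0 (half_rpow_lt_one (by norm_num)) (by norm_num)
    (by norm_num) (one_lt_four_mul_half_rpow_sq (by norm_num)) hpos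
    (Eventually.of_forall fun m => hW.measure_ball_le hr0 ?_ ω m)
  rw [half_rpow_sq]
  norm_num

lemma tendsto_two_div_sub_two {u : ℕ → ℝ} {κ : ℝ} (hκ : 0 < κ) (hu : Tendsto u atTop (𝓝 κ)) :
    Tendsto (fun k => ((2 / u k - 2 : ℝ) : EReal)) atTop (𝓝 ((2 / κ - 2 : ℝ) : EReal)) :=
  (continuous_coe_real_ereal.tendsto _).comp ((tendsto_const_nhds.div hu hκ.ne').sub_const 2)

lemma IsWienerMeasure.ae_upperLocOrd_le_of_le (hW : IsWienerMeasure W) (hμ : IsFBM H μ) {κ : ℝ}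
    (hκ : 0 < κ) (hκH : κ ≤ H) (hκ2 : κ ≤ 1 / 2) :
    ∀ᵐ ω ∂μ, upperLocOrd W ω ≤ ((2 / κ - 2 : ℝ) : EReal) := by
  obtain ⟨u, -, hu, hlim⟩ := exists_seq_strictMono_tendsto' hκ
  have h : ∀ᵐ ω ∂μ, ∀ k, upperLocOrd W ω ≤ ((2 / u k - 2 : ℝ) : EReal) := ae_all_iff.2 fun k =>
    hW.ae_upperLocOrd_le hμ (hu k).1 ((hu k).2.trans_le hκH) ((hu k).2.trans_le hκ2)
  filter_upwards [h] with ω hω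
  exact ge_of_tendsto' (tendsto_two_div_sub_two hκ hlim) hω

lemma IsWienerMeasure.ae_le_lowerLocOrd_self (hW : IsWienerMeasure W) (hH : 0 < H) (hH1 : H < 1)
    (hμ : IsFBM H μ) : ∀ᵐ ω ∂μ, ((2 / H - 2 : ℝ) : EReal) ≤ lowerLocOrd W ω := by
  obtain ⟨u, -, hu, hlim⟩ := exists_seq_strictAnti_tendsto' hH1
  have h : ∀ᵐ ω ∂μ, ∀ k, ((2 / u k - 2 : ℝ) : EReal) ≤ lowerLocOrd W ω := ae_all_iff.2 fun k =>
    hW.ae_le_lowerLocOrd hH hμ (hu k).1 (hu k).2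
  filter_upwards [h] with ω hω
  exact le_of_tendsto' (tendsto_two_div_sub_two hH hlim) hω

end LocalOrder

/-- For `W^H`-almost every path `ω̄`, the local order of the Wiener measure `W`
at `ω̄` exists and equals `2(H⁻¹ - 1)` when `0 < H < 1/2`, and `2` when
`1/2 ≤ H < 1`. -/
theorem wiener_local_order_at_fbm (H : ℝ) (hH : H ∈ Set.Ioo (0:ℝ) 1)
    (W WH : Measure PathSpace) (hW : IsWienerMeasure W) (hWH : IsFBM H WH) :
    ∀ᵐ ωb ∂WH,
      lowerLocOrd W ωb = ((if H < 1/2 then 2 * (H⁻¹ - 1) else 2 : ℝ) : EReal) ∧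
      upperLocOrd W ωb = ((if H < 1/2 then 2 * (H⁻¹ - 1) else 2 : ℝ) : EReal) := by
  suffices h : ∀ᵐ ωb ∂WH,
      ((if H < 1/2 then 2 * (H⁻¹ - 1) else 2 : ℝ) : EReal) ≤ lowerLocOrd W ωb ∧
      upperLocOrd W ωb ≤ ((if H < 1/2 then 2 * (H⁻¹ - 1) else 2 : ℝ) : EReal) by
    filter_upwards [h] with ωb hω
    have hle := lowerLocOrd_le_upperLocOrd W ωb
    exact ⟨le_antisymm (hle.trans hω.2) hω.1, le_antisymm hω.2 (hω.1.trans hle)⟩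
  split_ifs with h2
  · rw [show 2 * (H⁻¹ - 1) = 2 / H - 2 by ring]
    exact (hW.ae_le_lowerLocOrd_self hH.1 hH.2 hWH).and
      (hW.ae_upperLocOrd_le_of_le hWH hH.1 le_rfl h2.le)
  · refine (hW.ae_two_le_lowerLocOrd hH.1 hWH).and ?_
    have h := hW.ae_upperLocOrd_le_of_le hWH (κ := 1 / 2) (by norm_num) (not_lt.1 h2) le_rfl
    rwa [show (2 / (1 / 2) - 2 : ℝ) = 2 by norm_num] at h

end Multifractal
end
end

section
/- Let W be the Wiener measure on Ω and let ω̄ ∈ Ω. For every integer n ≥ 1 such that Q_n(ω̄) > 0 and for every ε > 0, one has −log W(C_n(ω̄, ε)) ≥ n²·Q_n(ω̄)²·(1/2 − 2ε/Q_n(ω̄)) − (n/2)·log(2nε²/π). -/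
open scoped ENNReal NNReal Topology
open Filter MeasureTheory Metric Set

noncomputable section

namespace Multifractal


open ProbabilityTheory in
/-- A finite product of nondegenerate real Gaussians has the product density. -/
lemma pi_gaussianReal_eq_withDensity {ι : Type*} [Fintype ι] (m : ℝ) {v : ℝ≥0} (hv : v ≠ 0) :
    Measure.pi (fun _ : ι => gaussianReal m v) =
      (volume : Measure (ι → ℝ)).withDensity
        (fun x => ENNReal.ofReal (∏ i, gaussianPDFReal m v (x i))) := by
  refine Measure.pi_eq fun s hs => ?_
  have hint : ∀ i, Integrable ((s i).indicator (gaussianPDFReal m v)) :=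
    fun i => (integrable_gaussianPDFReal m v).indicator (hs i)
  have hnonneg : ∀ i x, 0 ≤ (s i).indicator (gaussianPDFReal m v) x :=
    fun i x => indicator_nonneg (fun y _ => gaussianPDFReal_nonneg m v y) x
  have hind : (univ.pi s).indicator
      (fun x : ι → ℝ => ENNReal.ofReal (∏ i, gaussianPDFReal m v (x i))) =
      fun x => ENNReal.ofReal (∏ i, (s i).indicator (gaussianPDFReal m v) (x i)) := by
    funext x
    by_cases hx : x ∈ univ.pi s
    · rw [indicator_of_mem hx]
      congr 1
      exact Finset.prod_congr rfl fun i _ => (indicator_of_mem (hx i (mem_univ i)) _).symm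
    · rw [indicator_of_notMem hx]
      obtain ⟨i, hi⟩ : ∃ i, x i ∉ s i := by simpa [mem_univ_pi] using hx
      rw [Finset.prod_eq_zero (Finset.mem_univ i) (indicator_of_notMem hi _),
        ENNReal.ofReal_zero]
  rw [withDensity_apply _ (MeasurableSet.univ_pi hs),
    ← lintegral_indicator (MeasurableSet.univ_pi hs), hind, volume_pi,
    ← ofReal_integral_eq_lintegral_ofReal (Integrable.fintype_prod hint)
      (Eventually.of_forall fun x => Finset.prod_nonneg fun i _ => hnonneg i (x i)),
    integral_fintype_prod_eq_prod,
    ENNReal.ofReal_prod_of_nonneg fun i _ => integral_nonneg (hnonneg i)]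
  refine Finset.prod_congr rfl fun i _ => ?_
  rw [gaussianReal_apply_eq_integral m hv, integral_indicator (hs i)]

/-- The sum of the first `k` entries of a vector. -/
def partialSum {n : ℕ} (x : Fin n → ℝ) (k : ℕ) : ℝ :=
  ∑ i : Fin n, if (i : ℕ) < k then x i else 0

lemma partialSum_zero {n : ℕ} (x : Fin n → ℝ) : partialSum x 0 = 0 := by
  simp [partialSum]

lemma partialSum_succ {n : ℕ} (x : Fin n → ℝ) (j : Fin n) :
    partialSum x (j + 1) = partialSum x j + x j := by
  have h : x j = ∑ i : Fin n, if i = j then x i else 0 := by simp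
  rw [h, partialSum, partialSum, ← Finset.sum_add_distrib]
  refine Finset.sum_congr rfl fun i _ => ?_
  rcases lt_trichotomy i j with hij | hij | hij
  · have := Fin.lt_def.1 hij
    simp [hij.ne, this, Nat.lt_succ_of_lt this]
  · simp [hij]
  · have := Fin.lt_def.1 hij
    simp [hij.ne', hij.not_ge, hij.not_gt]

/-- The vectors whose partial sums stay `ε`-close to those prescribed by `b`. -/
def partialSumTube {n : ℕ} (b : Fin n → ℝ) (ε : ℝ) : Set (Fin n → ℝ) :=
  {x | ∀ j : Fin n, |partialSum x (j + 1) - b j| ≤ ε}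

lemma measurableSet_partialSumTube {n : ℕ} (b : Fin n → ℝ) (ε : ℝ) :
    MeasurableSet (partialSumTube b ε) := by
  have h : ∀ (j i : Fin n),
      Measurable fun x : Fin n → ℝ => if (i : ℕ) < (j : ℕ) + 1 then x i else 0 := by
    intro j i
    split_ifs <;> fun_prop
  rw [partialSumTube, ofPred_forall]
  refine MeasurableSet.iInter fun j => measurableSet_le ?_ measurable_const
  unfold partialSum
  exact ((Finset.measurable_sum _ fun i _ => h j i).sub_const _).abs

/-- Taking partial sums is a volume-preserving operation. -/
lemma volume_partialSumTube {n : ℕ} (b : Fin n → ℝ) {ε : ℝ} (hε : 0 ≤ ε) :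
    volume (partialSumTube b ε) = ENNReal.ofReal ((2 * ε) ^ n) := by
  let M : Matrix (Fin n) (Fin n) ℝ := Matrix.of fun j i => if i ≤ j then 1 else 0
  have hdet : LinearMap.det (Matrix.toLin' M) = 1 := by
    rw [LinearMap.det_toLin', Matrix.det_of_isLowerTriangular M]
    · simp [M]
    · intro i j hij
      have : i < j := hij
      simp [M, this]
  have hpre : partialSumTube b ε = Matrix.toLin' M ⁻¹' Metric.closedBall b ε := by
    ext x
    rw [mem_preimage, mem_closedBall, dist_pi_le_iff hε]
    refine forall_congr' fun j => ?_
    rw [Real.dist_eq]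
    have : Matrix.toLin' M x j = partialSum x (j + 1) := by
      simp [M, Matrix.toLin'_apply, Matrix.mulVec, dotProduct, partialSum]
    rw [this]
  rw [hpre, Measure.addHaar_preimage_linearMap _ (by rw [hdet]; exact one_ne_zero), hdet,
    Real.volume_pi_closedBall _ hε]
  simp

lemma coe_gridPt_s14 {n k : ℕ} (hn : 1 ≤ n) (hk : k ≤ n) : (gridPt n k : ℝ) = k / n := by
  have hn' : (0 : ℝ) < n := by exact_mod_cast hn
  have h1 : (k : ℝ) / n ≤ 1 := (div_le_one hn').2 (by exact_mod_cast hk)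
  have h0 : (0 : ℝ) ≤ k / n := by positivity
  simp [gridPt, clampI, h0, h1]

lemma gridPt_zero (n : ℕ) : gridPt n 0 = 0 := by
  ext
  simp [gridPt, clampI]

/-- The vector of increments of a path along the grid of mesh `1/n`. -/
def gridIncr (n : ℕ) (ω : PathSpace) (i : Fin n) : ℝ :=
  ω.1 (gridPt n (i + 1)) - ω.1 (gridPt n i)

lemma measurable_eval (t : unitInterval) : Measurable fun ω : PathSpace => ω.1 t :=
  ((continuous_eval_const t).comp continuous_subtype_val).measurable

lemma measurable_gridIncr (n : ℕ) : Measurable (gridIncr n) :=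
  measurable_pi_lambda _ fun _ => (measurable_eval _).sub (measurable_eval _)

lemma partialSum_gridIncr {n : ℕ} (ω : PathSpace) {k : ℕ} (hk : k ≤ n) :
    partialSum (gridIncr n ω) k = ω.1 (gridPt n k) := by
  induction k with
  | zero => rw [partialSum_zero, gridPt_zero, ω.2]
  | succ k ih =>
    have h := partialSum_succ (gridIncr n ω) ⟨k, hk⟩
    rw [ih (by omega)] at h
    simpa [gridIncr] using h

lemma cylinder_eq_preimage_partialSumTube (ωb : PathSpace) (n : ℕ) (ε : ℝ) :
    cylinder ωb n ε =
      gridIncr n ⁻¹' partialSumTube (fun j : Fin n => ωb.1 (gridPt n (j + 1))) ε := by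
  ext ω
  simp only [cylinder, partialSumTube, mem_preimage, mem_ofPred_eq, Finset.mem_Icc]
  constructor
  · intro h j
    rw [partialSum_gridIncr ω j.2]
    exact h _ ⟨by omega, j.2⟩
  · rintro h j ⟨hj1, hjn⟩
    have := h ⟨j - 1, by omega⟩
    simp only [Nat.sub_add_cancel hj1] at this
    rwa [partialSum_gridIncr ω hjn] at this

lemma gridIncr_covariance {n : ℕ} (hn : 1 ≤ n) (i j : Fin n) :
    min (gridPt n (i + 1) : ℝ) (gridPt n (j + 1)) - min (gridPt n (i + 1) : ℝ) (gridPt n j)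
      - min (gridPt n i : ℝ) (gridPt n (j + 1)) + min (gridPt n i : ℝ) (gridPt n j)
      = if i = j then (n : ℝ)⁻¹ else 0 := by
  have hn' : (0 : ℝ) ≤ n := by positivity
  rw [coe_gridPt_s14 hn i.2, coe_gridPt_s14 hn j.2, coe_gridPt_s14 hn i.2.le, coe_gridPt_s14 hn j.2.le]
  simp only [min_div_div_right hn']
  norm_cast
  rcases lt_trichotomy i j with hij | hij | hij
  · have := Fin.lt_def.1 hij
    rw [if_neg hij.ne, min_eq_left (by omega), min_eq_left (by omega), min_eq_left (by omega),
      min_eq_left (by omega)]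
    ring
  · subst hij
    rw [if_pos rfl, min_self, min_eq_right (by omega), min_eq_left (by omega), min_self]
    push_cast
    ring
  · have := Fin.lt_def.1 hij
    rw [if_neg hij.ne', min_eq_right (by omega), min_eq_right (by omega),
      min_eq_right (by omega), min_eq_right (by omega)]
    ring

open ProbabilityTheory in
lemma IsWienerMeasure.map_sum_mul_gridIncr {W : Measure PathSpace} (hW : IsWienerMeasure W)
    {n : ℕ} (hn : 1 ≤ n) (c : Fin n → ℝ) :
    W.map (fun ω => ∑ i, c i * gridIncr n ω i) =
      gaussianReal 0 (Real.toNNReal ((n : ℝ)⁻¹ * ∑ i, c i ^ 2)) := by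
  have h := hW.2 (n + n)
    (Fin.append (fun i : Fin n => gridPt n (i + 1)) (fun i : Fin n => gridPt n i))
    (Fin.append c (-c))
  simp only [Fin.sum_univ_add, Fin.append_left, Fin.append_right, Pi.neg_apply] at h
  convert h using 3 with ω
  · rw [← Finset.sum_add_distrib]
    exact Finset.sum_congr rfl fun i _ => by rw [gridIncr]; ring
  · simp only [← Finset.sum_add_distrib]
    rw [Finset.mul_sum]
    refine Finset.sum_congr rfl fun i _ => ?_
    trans ∑ j, c i * c j * (if i = j then (n : ℝ)⁻¹ else 0)
    · simp
      ring
    · refine Finset.sum_congr rfl fun j _ => ?_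
      rw [← gridIncr_covariance hn i j]
      ring

open ProbabilityTheory in
/-- The grid increments under the Wiener measure are independent centered Gaussians of
variance `1/n`. -/
lemma IsWienerMeasure.map_gridIncr {W : Measure PathSpace} (hW : IsWienerMeasure W)
    {n : ℕ} (hn : 1 ≤ n) :
    W.map (gridIncr n) = Measure.pi fun _ : Fin n => gaussianReal 0 (n : ℝ≥0)⁻¹ := by
  have := hW.1
  have : IsProbabilityMeasure (W.map (gridIncr n)) :=
    Measure.isProbabilityMeasure_map (measurable_gridIncr n).aemeasurable
  refine charFun_eq_pi_iff.1 fun t => ?_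
  have hlin : charFun ((W.map (gridIncr n)).map (WithLp.toLp 2)) t =
      charFun (W.map (fun ω => ∑ i, t i * gridIncr n ω i)) 1 := by
    have hm : Measurable fun ω => ∑ i, t i * gridIncr n ω i :=
      Finset.measurable_sum _ fun i _ =>
        ((measurable_pi_apply i).comp (measurable_gridIncr n)).const_mul _
    rw [charFun_apply_real, charFun_apply, ← MeasurableEquiv.coe_toLp, integral_map_equiv,
      integral_map (measurable_gridIncr n).aemeasurable (by fun_prop),
      integral_map hm.aemeasurable (by fun_prop)]
    simp [PiLp.inner_apply]
  rw [hlin, hW.map_sum_mul_gridIncr hn]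
  simp only [charFun_gaussianReal]
  rw [← Complex.exp_sum, Real.coe_toNNReal _ (by positivity)]
  congr 1
  push_cast
  simp only [Finset.mul_sum, Finset.sum_div, mul_zero, zero_mul, zero_sub, one_pow, mul_one,
    Finset.sum_neg_distrib]

lemma abs_sub_gridIncr_le_of_mem_partialSumTube {n : ℕ} {ωb : PathSpace} {ε : ℝ} (hε : 0 ≤ ε)
    {x : Fin n → ℝ} (hx : x ∈ partialSumTube (fun j : Fin n => ωb.1 (gridPt n (j + 1))) ε)
    (i : Fin n) : |x i - gridIncr n ωb i| ≤ 2 * ε := by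
  have hclose : ∀ k ≤ n, |partialSum x k - ωb.1 (gridPt n k)| ≤ ε := by
    rintro (_ | k) hk
    · simpa [partialSum_zero, gridPt_zero, ωb.2] using hε
    · exact hx ⟨k, hk⟩
  have h : x i - gridIncr n ωb i = (partialSum x (i + 1) - ωb.1 (gridPt n (i + 1)))
      - (partialSum x i - ωb.1 (gridPt n i)) := by
    rw [partialSum_succ, gridIncr]
    ring
  rw [h]
  linarith [abs_sub (partialSum x (i + 1) - ωb.1 (gridPt n (i + 1)))
    (partialSum x i - ωb.1 (gridPt n i)), hclose _ i.2, hclose _ i.2.le]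

/-- If `x` is `δ`-close to `a` in the supremum norm, then `‖x‖² ≥ ‖a‖² - 2 δ √n ‖a‖`. -/
lemma sum_sq_sub_le_sum_sq_of_abs_sub_le {n : ℕ} {a x : Fin n → ℝ} {δ : ℝ}
    (h : ∀ i, |x i - a i| ≤ δ) :
    ∑ i, a i ^ 2 - 2 * δ * √(n * ∑ i, a i ^ 2) ≤ ∑ i, x i ^ 2 := by
  rcases isEmpty_or_nonempty (Fin n) with hn | ⟨⟨i₀⟩⟩
  · simp
  have hδ : 0 ≤ δ := (abs_nonneg _).trans (h i₀)
  have hl1 : ∑ i, |a i| ≤ √(n * ∑ i, a i ^ 2) := by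
    refine Real.le_sqrt_of_sq_le ?_
    simpa using sq_sum_le_card_mul_sum_sq (s := Finset.univ) (f := fun i => |a i|)
  have hpt : ∀ i, a i ^ 2 - 2 * δ * |a i| ≤ x i ^ 2 := by
    intro i
    have h1 : |a i * (x i - a i)| ≤ |a i| * δ := by
      rw [abs_mul]
      exact mul_le_mul_of_nonneg_left (h i) (abs_nonneg _)
    nlinarith [neg_abs_le (a i * (x i - a i)), sq_nonneg (x i - a i)]
  have hsum := Finset.sum_le_sum fun i (_ : i ∈ Finset.univ) => hpt i
  rw [Finset.sum_sub_distrib, ← Finset.mul_sum] at hsum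
  nlinarith [mul_le_mul_of_nonneg_left hl1 (mul_nonneg zero_le_two hδ)]

lemma sum_gridIncr_sq {n : ℕ} (hn : 1 ≤ n) (ω : PathSpace) :
    ∑ i, gridIncr n ω i ^ 2 = n * Qvar ω n ^ 2 := by
  have hn' : (n : ℝ) ≠ 0 := by positivity
  rw [Qvar, Real.sq_sqrt (by positivity), one_div, mul_inv_cancel_left₀ hn']
  exact Fin.sum_univ_eq_sum_range
    (fun i => (ω.1 (gridPt n (i + 1)) - ω.1 (gridPt n i)) ^ 2) n

open ProbabilityTheory in
lemma prod_gaussianPDFReal_le_of_mem_partialSumTube {n : ℕ} (hn : 1 ≤ n) {ωb : PathSpace}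
    {ε : ℝ} (hε : 0 ≤ ε) {x : Fin n → ℝ}
    (hx : x ∈ partialSumTube (fun j : Fin n => ωb.1 (gridPt n (j + 1))) ε) :
    ∏ i, gaussianPDFReal 0 (n : ℝ≥0)⁻¹ (x i) ≤
      (√(2 * Real.pi / n))⁻¹ ^ n *
        Real.exp (-((n : ℝ) ^ 2 * (Qvar ωb n ^ 2 / 2 - 2 * ε * Qvar ωb n))) := by
  have hn' : (0 : ℝ) < n := by exact_mod_cast hn
  have hQ : 0 ≤ Qvar ωb n := Real.sqrt_nonneg _
  have hsq := sum_sq_sub_le_sum_sq_of_abs_sub_le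
    (abs_sub_gridIncr_le_of_mem_partialSumTube hε hx)
  have hroot : √(n * (n * Qvar ωb n ^ 2)) = n * Qvar ωb n := by
    rw [← mul_assoc, ← sq, ← mul_pow, Real.sqrt_sq (by positivity)]
  rw [sum_gridIncr_sq hn, hroot] at hsq
  simp only [gaussianPDFReal_def, Finset.prod_mul_distrib, Finset.prod_const, Finset.card_univ,
    Fintype.card_fin, ← Real.exp_sum, NNReal.coe_inv, NNReal.coe_natCast, ← div_eq_mul_inv,
    sub_zero]
  gcongr
  rw [← Finset.sum_div, Finset.sum_neg_distrib, div_div_eq_mul_div, div_le_iff₀ two_pos]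
  nlinarith [mul_le_mul_of_nonneg_left hsq hn'.le]

/-- Upper bound of cylinder measures via the discrete quadratic variation:
`-log W(C_n(ω̄,ε)) ≥ n²Q_n(ω̄)²(1/2 - 2ε/Q_n(ω̄)) - (n/2)·log(2nε²/π)`. -/
theorem cylinder_measure_upper (W : Measure PathSpace) (hW : IsWienerMeasure W)
    (ωb : PathSpace) (n : ℕ) (hn : 1 ≤ n) (hQ : 0 < Qvar ωb n) (ε : ℝ) (hε : 0 < ε) :
    (n:ℝ)^2 * Qvar ωb n ^ 2 * (1/2 - 2 * ε / Qvar ωb n)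
        - ((n:ℝ)/2) * Real.log (2 * (n:ℝ) * ε^2 / Real.pi)
      ≤ -Real.log ((W (cylinder ωb n ε)).toReal) := by
  have hn' : (0 : ℝ) < n := by exact_mod_cast hn
  have hv : (n : ℝ≥0)⁻¹ ≠ 0 := inv_ne_zero (by exact_mod_cast hn'.ne')
  set Q := Qvar ωb n
  set A := partialSumTube (fun j : Fin n => ωb.1 (gridPt n (j + 1))) ε
  have hAm : MeasurableSet A := measurableSet_partialSumTube _ _
  set K : ℝ := (√(2 * Real.pi / n))⁻¹ ^ n * Real.exp (-((n : ℝ) ^ 2 * (Q ^ 2 / 2 - 2 * ε * Q)))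
    with hK
  have hKpos : 0 < K := by positivity
  have hWA : W (cylinder ωb n ε) = ∫⁻ x in A,
      ENNReal.ofReal (∏ i, ProbabilityTheory.gaussianPDFReal 0 (n : ℝ≥0)⁻¹ (x i)) := by
    rw [cylinder_eq_preimage_partialSumTube, ← Measure.map_apply (measurable_gridIncr n) hAm,
      hW.map_gridIncr hn, pi_gaussianReal_eq_withDensity 0 hv, withDensity_apply _ hAm]
  have hvol : volume A = ENNReal.ofReal ((2 * ε) ^ n) := volume_partialSumTube _ hε.le
  have hle : W (cylinder ωb n ε) ≤ ENNReal.ofReal (K * (2 * ε) ^ n) := by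
    rw [hWA, ENNReal.ofReal_mul hKpos.le, ← hvol, ← setLIntegral_const]
    exact setLIntegral_mono measurable_const fun x hx => ENNReal.ofReal_le_ofReal
      (prod_gaussianPDFReal_le_of_mem_partialSumTube hn hε.le hx)
  have hpos : 0 < W (cylinder ωb n ε) := by
    rw [hWA, setLIntegral_pos_iff]
    · have hsupp : Function.support (fun x : Fin n → ℝ => ENNReal.ofReal
          (∏ i, ProbabilityTheory.gaussianPDFReal 0 (n : ℝ≥0)⁻¹ (x i))) = univ :=
        Set.eq_univ_of_forall fun x => (ENNReal.ofReal_pos.2 (Finset.prod_pos fun i _ =>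
          ProbabilityTheory.gaussianPDFReal_pos 0 _ (x i) hv)).ne'
      rw [hsupp, univ_inter, hvol, ENNReal.ofReal_pos]
      positivity
    · exact (Finset.measurable_prod _ fun i _ =>
        (ProbabilityTheory.measurable_gaussianPDFReal 0 _).comp
          (measurable_pi_apply i)).ennreal_ofReal
  have hlog : Real.log (W (cylinder ωb n ε)).toReal ≤ Real.log (K * (2 * ε) ^ n) :=
    Real.log_le_log (ENNReal.toReal_pos hpos.ne' (hle.trans_lt ENNReal.ofReal_lt_top).ne)
      (ENNReal.toReal_le_of_le_ofReal (by positivity) hle)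
  have hval : Real.log (K * (2 * ε) ^ n) = (n : ℝ) / 2 * Real.log (2 * n * ε ^ 2 / Real.pi)
      - (n : ℝ) ^ 2 * (Q ^ 2 / 2 - 2 * ε * Q) := by
    have hsplit : 2 * n * ε ^ 2 / Real.pi = (2 * Real.pi / n)⁻¹ * (2 * ε) ^ 2 := by
      field_simp
    rw [hsplit, hK, Real.log_mul (by positivity) (by positivity),
      Real.log_mul (by positivity) (by positivity),
      Real.log_mul (by positivity) (by positivity), Real.log_exp, Real.log_pow, Real.log_pow,
      Real.log_pow, Real.log_inv, Real.log_inv, Real.log_sqrt (by positivity)]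
    push_cast
    ring
  have hlhs : (n : ℝ) ^ 2 * Q ^ 2 * (1 / 2 - 2 * ε / Q)
      = (n : ℝ) ^ 2 * (Q ^ 2 / 2 - 2 * ε * Q) := by
    field_simp
  linarith

end Multifractal
end
end
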